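/- Let φ be an automorphism of the unit ball B_N. If f is a continuous function on ∂B_N (for the Hardy space case), respectively a continuous function on the closed ball \overline{B_N} (for the weighted Bergman case), then the operator C_φ T_f − T_{f∘φ} C_φ is compact on H^2(B_N), respectively on A^2_s(B_N) for s > −1. -/

import Mathlib

open Filter MeasureTheory Metric Set
open scoped ComplexInnerProductSpace Topology

noncomputable section

/-- Borel measurable structure on `ℂ^N`. -/
instance (N : ℕ) : MeasurableSpace (EuclideanSpace ℂ (Fin N)) := borel _

instance (N : ℕ) : BorelSpace (EuclideanSpace ℂ (Fin N)) := ⟨rfl⟩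

/-- The open unit ball `B_N` of `ℂ^N`. -/
abbrev Ball (N : ℕ) : Set (EuclideanSpace ℂ (Fin N)) := Metric.ball 0 1

/-- The normalized volume measure `v` on the unit ball of `ℂ^N`. -/
def ballMeasure (N : ℕ) : Measure (EuclideanSpace ℂ (Fin N)) :=
  (volume (Ball N))⁻¹ • volume.restrict (Ball N)

/-- The normalized surface measure `σ` on the unit sphere `∂B_N`, realized as a measure on
`ℂ^N` (supported on the sphere): it is the push-forward of the normalized volume measure of
the ball under the radial projection `z ↦ z/‖z‖`. -/
def sphereMeasure (N : ℕ) : Measure (EuclideanSpace ℂ (Fin N)) :=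
  Measure.map (fun z => ‖z‖⁻¹ • z) (ballMeasure N)

/-- The weighted measure `dv_s(z) = (Γ(N+s+1)/(N! Γ(s+1))) (1-|z|²)^s dv(z)` defining the
weighted Bergman space `A²_s(B_N)`. -/
def bergmanMeasure (N : ℕ) (s : ℝ) : Measure (EuclideanSpace ℂ (Fin N)) :=
  (ballMeasure N).withDensity fun z =>
    ENNReal.ofReal (Real.Gamma (N + s + 1) / (Nat.factorial N * Real.Gamma (s + 1))
      * (1 - ‖z‖ ^ 2) ^ s)

/-- An abstract presentation of the Hardy space `H²(B_N)` (for `t = N`, `μ` the normalized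
surface measure on the sphere) or of the weighted Bergman space `A²_s(B_N)` (for
`t = N + s + 1`, `μ` the weighted volume measure `dv_s`): a reproducing-kernel Hilbert space
of holomorphic functions on `B_N` with kernel `K_w(z) = (1 - ⟨z,w⟩)^{-t}`, whose inner
product is computed by the (dilated) integral pairing against `μ`. -/
structure BallFunctionSpace (N : ℕ) (t : ℝ) (μ : Measure (EuclideanSpace ℂ (Fin N))) where
  (H : Type)
  [grp : NormedAddCommGroup H]
  [ips : InnerProductSpace ℂ H]
  [cpl : CompleteSpace H]
  eval : H → EuclideanSpace ℂ (Fin N) → ℂ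
  eval_add : ∀ f g : H, ∀ z, eval (f + g) z = eval f z + eval g z
  eval_smul : ∀ (c : ℂ) (f : H) (z : EuclideanSpace ℂ (Fin N)), eval (c • f) z = c * eval f z
  holo : ∀ f : H, DifferentiableOn ℂ (eval f) (Ball N)
  eval_injective : ∀ f g : H, (∀ z ∈ Ball N, eval f z = eval g z) → f = g
  kernel : EuclideanSpace ℂ (Fin N) → H
  eval_kernel : ∀ w ∈ Ball N, ∀ z ∈ Ball N, eval (kernel w) z = (1 - ⟪w, z⟫) ^ (-(t : ℂ))
  reproducing : ∀ (f : H), ∀ w ∈ Ball N, ⟪kernel w, f⟫ = eval f w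
  inner_eq : ∀ f g : H,
    Tendsto (fun r : ℝ => ∫ z, (starRingEnd ℂ) (eval f (r • z)) * eval g (r • z) ∂μ)
      (𝓝[<] (1 : ℝ)) (𝓝 ⟪f, g⟫)

attribute [instance] BallFunctionSpace.grp BallFunctionSpace.ips BallFunctionSpace.cpl

/-- `T` is the composition operator `C_φ : f ↦ f ∘ φ` on `S`. -/
def BallFunctionSpace.IsCompositionOperator {N : ℕ} {t : ℝ}
    {μ : Measure (EuclideanSpace ℂ (Fin N))} (S : BallFunctionSpace N t μ)
    (φ : EuclideanSpace ℂ (Fin N) → EuclideanSpace ℂ (Fin N)) (T : S.H →L[ℂ] S.H) : Prop :=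
  ∀ f : S.H, ∀ z ∈ Ball N, S.eval (T f) z = S.eval f (φ z)

/-- `T` is the Toeplitz operator `T_b : u ↦ P(b·u)` with symbol `b` on `S`;  equivalently,
`⟪v, T u⟫ = lim_{r→1⁻} ∫ conj(v(rz)) b(z) u(rz) dμ(z)` for all `u, v ∈ S`. -/
def BallFunctionSpace.IsToeplitzOperator {N : ℕ} {t : ℝ}
    {μ : Measure (EuclideanSpace ℂ (Fin N))} (S : BallFunctionSpace N t μ)
    (b : EuclideanSpace ℂ (Fin N) → ℂ) (T : S.H →L[ℂ] S.H) : Prop :=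
  ∀ u v : S.H,
    Tendsto (fun r : ℝ => ∫ z, (starRingEnd ℂ) (S.eval v (r • z)) * b z * S.eval u (r • z) ∂μ)
      (𝓝[<] (1 : ℝ)) (𝓝 ⟪v, T u⟫)

/-- `φ` is an automorphism (biholomorphic self-map) of the unit ball `B_N`. -/
def IsBallAutomorphism (N : ℕ) (φ : EuclideanSpace ℂ (Fin N) → EuclideanSpace ℂ (Fin N)) : Prop :=
  DifferentiableOn ℂ φ (Ball N) ∧ Set.MapsTo φ (Ball N) (Ball N) ∧
    ∃ ψ : EuclideanSpace ℂ (Fin N) → EuclideanSpace ℂ (Fin N),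
      DifferentiableOn ℂ ψ (Ball N) ∧ Set.MapsTo ψ (Ball N) (Ball N) ∧
      (∀ z ∈ Ball N, ψ (φ z) = z) ∧ (∀ z ∈ Ball N, φ (ψ z) = z)

open scoped ComplexConjugate

/-!
Multiplying by a coordinate and then composing with `φ` is the same as composing with `φ` and then
multiplying by the corresponding component of `φ`. So `C_φ T_f = T_{f∘φ} C_φ` when `f` is a
coordinate function, and the task is to pass to general `f` modulo compact operators.

The self-commutators of the coordinate multipliers are compact, because they map the homogeneous
polynomials of degree `n` to functions damped by a factor `1/(n + t)`. Hence the Hankel operators of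
the conjugate coordinates are compact, and by the Stone-Weierstrass theorem those of all continuous
symbols are. So `f ↦ T_f` is a `*`-homomorphism modulo the compact operators, and a Fuglede-Putnam
argument in the Calkin algebra extends the intertwining relation from the coordinates to their
conjugates. Another application of the Stone-Weierstrass theorem extends it to all symbols.
-/

section QuotientAlgebra

variable {A : Type*} [NormedRing A] (I : Ideal A) [I.IsTwoSided]

lemma norm_quotient_mul_le (x y : A ⧸ I) : ‖x * y‖ ≤ ‖x‖ * ‖y‖ := by
  have limit : Tendsto (fun δ : ℝ ↦ (‖x‖ + δ) * (‖y‖ + δ)) (𝓝[>] 0) (𝓝 (‖x‖ * ‖y‖)) := by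
    have : Continuous fun δ : ℝ ↦ (‖x‖ + δ) * (‖y‖ + δ) := by fun_prop
    simpa using (this.tendsto 0).mono_left nhdsWithin_le_nhds
  refine ge_of_tendsto limit (eventually_mem_nhdsWithin.mono fun δ hδ ↦ ?_)
  obtain ⟨a, rfl, ha⟩ := Submodule.Quotient.norm_mk_lt x hδ
  obtain ⟨b, rfl, hb⟩ := Submodule.Quotient.norm_mk_lt y hδ
  calc _ ≤ ‖a * b‖ := Submodule.Quotient.norm_mk_le I (a * b)
    _ ≤ ‖a‖ * ‖b‖ := norm_mul_le a b
    _ ≤ _ := by gcongr; exact (norm_nonneg a).trans ha.le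

/-- The Banach-algebra norm on the quotient of a normed ring by a closed two-sided ideal; Mathlib
provides it for commutative rings only. -/
instance quotientNormedRing [IsClosed (I : Set A)] : NormedRing (A ⧸ I) where
  __ := Submodule.Quotient.normedAddCommGroup I
  __ := Ideal.Quotient.ring I
  norm_mul_le := norm_quotient_mul_le I

/-- The complex Banach-algebra structure attached to `quotientNormedRing`. -/
instance quotientNormedAlgebra [NormedAlgebra ℂ A] [IsClosed (I : Set A)] :
    NormedAlgebra ℂ (A ⧸ I) where
  __ := (inferInstance : Algebra ℂ (A ⧸ I))
  norm_smul_le c x := norm_smul_le c x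

end QuotientAlgebra

section FugledePutnam

variable {A B : Type*} [CommCStarAlgebra A] [NormedRing B] [NormedAlgebra ℂ B] [CompleteSpace B]

lemma norm_exp_smul_star_sub_le (a : A) (z : ℂ) :
    ‖NormedSpace.exp (z • star a - conj z • a)‖ ≤ 1 := by
  let _ : NormedAlgebra ℚ A := .restrictScalars ℚ ℂ A
  have skew : z • star a - conj z • a ∈ skewAdjoint A := by
    simp [skewAdjoint.mem_iff, star_sub, star_smul]
  rcases subsingleton_or_nontrivial A with _ | _
  · simp [Subsingleton.elim (NormedSpace.exp _) (0 : A)]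
  · exact (CStarRing.norm_of_mem_unitary
      (NormedSpace.exp_mem_unitary_of_mem_skewAdjoint skew)).le

/-- The entire function `z ↦ e^{zb} c e^{-za}` of Rosenblum's proof of the Fuglede–Putnam
theorem. -/
def rosenblumFun (b c a : B) (z : ℂ) : B := NormedSpace.exp (z • b) * c * NormedSpace.exp (z • -a)

lemma hasDerivAt_rosenblumFun (b c a : B) (z : ℂ) :
    HasDerivAt (rosenblumFun b c a) (NormedSpace.exp (z • b) * b * c * NormedSpace.exp (z • -a) +
      NormedSpace.exp (z • b) * c * (NormedSpace.exp (z • -a) * -a)) z :=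
  ((hasDerivAt_exp_smul_const b z).mul_const c).mul (hasDerivAt_exp_smul_const (-a) z)

variable {ρ σ : A →A[ℂ] B} {c : B} {a : A}

/-- Inserting `c = σ(e^{-z̄a}) c ρ(e^{z̄a})` turns both exponents into skew-adjoint elements. -/
lemma rosenblumFun_map_star (h : SemiconjBy c (ρ a) (σ a)) (z : ℂ) :
    rosenblumFun (σ (star a)) c (ρ (star a)) z =
      σ (NormedSpace.exp (z • star a - conj z • a)) * c *
        ρ (NormedSpace.exp (-z • star a - conj (-z) • a)) := by
  let _ : NormedAlgebra ℚ A := .restrictScalars ℚ ℂ A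
  let _ : NormedAlgebra ℚ B := .restrictScalars ℚ ℂ B
  have intertwine := (h.smul_right (conj z)).exp_neg_mul_mul_exp_eq_self
  have exponent : -z • star a - conj (-z) • a = conj z • a + -(z • star a) := by
    simp only [map_neg]; module
  rw [exponent, rosenblumFun]
  nth_rw 1 [← intertwine]
  simp [sub_eq_add_neg, NormedSpace.exp_add, NormedSpace.map_exp _ (map_continuous _), mul_assoc]

/-- The Fuglede–Putnam theorem for representations of a commutative C⋆-algebra in a Banach
algebra. -/
theorem semiconjBy_map_star (h : SemiconjBy c (ρ a) (σ a)) :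
    SemiconjBy c (ρ (star a)) (σ (star a)) := by
  set F := rosenblumFun (σ (star a)) c (ρ (star a)) with hF
  have bounded : Bornology.IsBounded (range F) := by
    refine isBounded_iff_forall_norm_le.2
      ⟨‖σ.toContinuousLinearMap‖ * 1 * ‖c‖ * (‖ρ.toContinuousLinearMap‖ * 1), ?_⟩
    rintro - ⟨z, rfl⟩
    rw [hF, rosenblumFun_map_star h]
    refine (norm_mul_le_of_le (norm_mul_le_of_le ?_ le_rfl) ?_)
    · exact σ.toContinuousLinearMap.le_opNorm_of_le (norm_exp_smul_star_sub_le a z)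
    · exact ρ.toContinuousLinearMap.le_opNorm_of_le (norm_exp_smul_star_sub_le a (-z))
  have constant : F = fun _ ↦ c := by
    ext z
    have differentiable : Differentiable ℂ F := fun z ↦
      (hasDerivAt_rosenblumFun _ _ _ z).differentiableAt
    simpa [hF, rosenblumFun] using differentiable.apply_eq_apply_of_bounded bounded z 0
  have derivative := hasDerivAt_rosenblumFun (σ (star a)) c (ρ (star a)) 0
  rw [← hF, constant] at derivative
  exact (add_neg_eq_zero.1 <| by simpa using derivative.unique (hasDerivAt_const 0 c)).symm

end FugledePutnam

section Intertwining

variable {X B : Type*} [TopologicalSpace X] [CompactSpace X] [NormedRing B] [NormedAlgebra ℂ B]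

lemma subalgebra_eq_top_of_isClosed_of_separates (𝒜 : Subalgebra ℂ C(X, ℂ))
    (closed : IsClosed (𝒜 : Set C(X, ℂ))) {ι : Type*} (g : ι → C(X, ℂ))
    (separates : ∀ x y, (∀ i, g i x = g i y) → x = y)
    (mem : ∀ i, g i ∈ 𝒜) (star_mem : ∀ i, star (g i) ∈ 𝒜) : 𝒜 = ⊤ := by
  set 𝒮 := StarAlgebra.adjoin ℂ (range g) with h𝒮
  have le : 𝒮.toSubalgebra ≤ 𝒜 := by
    rw [h𝒮, StarAlgebra.adjoin_toSubalgebra, Algebra.adjoin_le_iff]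
    rintro a (⟨i, rfl⟩ | ⟨i, hi⟩)
    · exact mem i
    · rw [← star_star a, ← hi]
      exact star_mem i
  have dense : 𝒮.topologicalClosure = ⊤ := by
    refine ContinuousMap.starSubalgebra_topologicalClosure_eq_top_of_separatesPoints 𝒮 ?_
    intro x y hxy
    obtain ⟨i, hi⟩ := not_forall.1 (mt (separates x y) hxy)
    exact ⟨g i, ⟨g i, StarAlgebra.subset_adjoin ℂ _ ⟨i, rfl⟩, rfl⟩, hi⟩
  refine eq_top_iff.2 fun a _ ↦ closed.closure_subset_iff.2 le ?_
  have : a ∈ 𝒮.topologicalClosure := dense ▸ StarSubalgebra.mem_top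
  exact this

theorem semiconjBy_map_of_separates [CompleteSpace B] (ρ σ : C(X, ℂ) →A[ℂ] B) {c : B}
    {ι : Type*} (g : ι → C(X, ℂ)) (separates : ∀ x y, (∀ i, g i x = g i y) → x = y)
    (h : ∀ i, SemiconjBy c (ρ (g i)) (σ (g i))) (a : C(X, ℂ)) : SemiconjBy c (ρ a) (σ a) := by
  let 𝒜 : Subalgebra ℂ C(X, ℂ) :=
    { carrier := {a | SemiconjBy c (ρ a) (σ a)}
      mul_mem' := fun ha hb ↦ by simpa using SemiconjBy.mul_right ha hb
      add_mem' := fun ha hb ↦ by simpa using SemiconjBy.add_right ha hb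
      algebraMap_mem' := fun r ↦ by
        rw [mem_ofPred_eq, AlgHomClass.commutes, AlgHomClass.commutes]
        exact Algebra.commute_algebraMap_right r c }
  have closed : IsClosed (𝒜 : Set C(X, ℂ)) :=
    isClosed_eq (f := fun a ↦ c * ρ a) (by fun_prop) (by fun_prop)
  have top : 𝒜 = ⊤ := subalgebra_eq_top_of_isClosed_of_separates 𝒜 closed g separates h fun i ↦
    semiconjBy_map_star (h i)
  exact (top ▸ Algebra.mem_top : a ∈ 𝒜)

end Intertwining

section Calkin

variable (E : Type*) [NormedAddCommGroup E] [NormedSpace ℂ E]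

/-- The ideal of compact operators. -/
def compactIdeal : Ideal (E →L[ℂ] E) where
  __ := compactOperator (RingHom.id ℂ) E E
  smul_mem' T _ hS := hS.clm_comp T

instance : (compactIdeal E).IsTwoSided := ⟨fun T hS ↦ hS.comp_clm T⟩

instance [CompleteSpace E] : IsClosed (compactIdeal E : Set (E →L[ℂ] E)) :=
  isClosed_setOfPred_isCompactOperator

/-- The Calkin algebra: bounded operators modulo compact operators. -/
abbrev CalkinAlgebra : Type _ := (E →L[ℂ] E) ⧸ compactIdeal E

variable {E}

/-- The canonical map onto the Calkin algebra. -/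
def toCalkin : (E →L[ℂ] E) →ₐ[ℂ] CalkinAlgebra E := Ideal.Quotient.mkₐ ℂ (compactIdeal E)

lemma toCalkin_eq_iff {S T : E →L[ℂ] E} : toCalkin S = toCalkin T ↔ IsCompactOperator (S - T) :=
  Ideal.Quotient.mk_eq_mk_iff_sub_mem S T

lemma continuous_toCalkin : Continuous (toCalkin (E := E)) :=
  AddMonoidHomClass.continuous_of_bound toCalkin 1 fun T ↦
    (Submodule.Quotient.norm_mk_le (compactIdeal E) T).trans_eq (one_mul ‖T‖).symm

end Calkin

section Graded

variable {H F : Type*} [NormedAddCommGroup H] [InnerProductSpace ℂ H] [NormedAddCommGroup F]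
  [NormedSpace ℂ F] {V : ℕ → Submodule ℂ H} {A B : H →L[ℂ] F} {c : ℕ → ℂ}

lemma opNorm_le_of_graded (orthogonal : OrthogonalFamily ℂ (fun n ↦ V n) fun n ↦ (V n).subtypeₗᵢ)
    (dense : (⨆ n, V n).topologicalClosure = ⊤) (h : ∀ n, ∀ x ∈ V n, A x = c n • B x) {ε : ℝ}
    (hε : 0 ≤ ε) (hc : ∀ n, ‖c n‖ ≤ ε) : ‖A‖ ≤ ‖B‖ * ε := by
  refine A.opNorm_le_bound (by positivity) fun x ↦ ?_
  have closed : IsClosed {x | ‖A x‖ ≤ ‖B‖ * ε * ‖x‖} := isClosed_le (by fun_prop) (by fun_prop)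
  refine closed.closure_subset_iff.2 ?_
    ((Submodule.dense_iff_topologicalClosure_eq_top.2 dense) x)
  intro x hx
  obtain ⟨f, hf, rfl⟩ := (Submodule.mem_iSup_iff_exists_finsupp _ _).1 hx
  have pythagoras (d : ℕ → ℂ) :
      ‖∑ n ∈ f.support, d n • f n‖ ^ 2 = ∑ n ∈ f.support, ‖d n • f n‖ ^ 2 := by
    simpa using orthogonal.norm_sum (fun n ↦ (d n • ⟨f n, hf n⟩ : V n)) f.support
  have contraction : ‖∑ n ∈ f.support, c n • f n‖ ≤ ε * ‖∑ n ∈ f.support, f n‖ := by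
    have pythagoras_one := pythagoras 1
    simp only [Pi.one_apply, one_smul] at pythagoras_one
    refine le_of_sq_le_sq ?_ (by positivity)
    rw [pythagoras, mul_pow, pythagoras_one, Finset.mul_sum]
    gcongr with n
    rw [norm_smul, mul_pow]
    gcongr
    exact hc n
  calc ‖A (f.sum fun _ y ↦ y)‖ = ‖B (∑ n ∈ f.support, c n • f n)‖ := by
        simp [Finsupp.sum, map_sum, h _ _ (hf _)]
    _ ≤ ‖B‖ * (ε * ‖∑ n ∈ f.support, f n‖) := B.le_opNorm_of_le contraction
    _ = ‖B‖ * ε * ‖f.sum fun _ y ↦ y‖ := (mul_assoc _ _ _).symm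

lemma isCompactOperator_starProjection (W : Submodule ℂ H) [FiniteDimensional ℂ W] :
    IsCompactOperator W.starProjection :=
  have : ProperSpace W := FiniteDimensional.proper ℂ W
  (isCompactOperator_of_locallyCompactSpace_dom W.orthogonalProjectionOnto).clm_comp W.subtypeL

lemma starProjection_finset_sup_of_mem {n : ℕ} {s : Finset ℕ} [(s.sup V).HasOrthogonalProjection]
    (hn : n ∈ s) {x : H} (hx : x ∈ V n) : (s.sup V).starProjection x = x :=
  Submodule.starProjection_eq_self_iff.2 (Finset.le_sup (f := V) hn hx)

lemma starProjection_finset_sup_of_notMem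
    (orthogonal : OrthogonalFamily ℂ (fun n ↦ V n) fun n ↦ (V n).subtypeₗᵢ)
    {n : ℕ} {s : Finset ℕ} [(s.sup V).HasOrthogonalProjection] (hn : n ∉ s) {x : H}
    (hx : x ∈ V n) : (s.sup V).starProjection x = 0 := by
  have le : s.sup V ≤ (ℂ ∙ x)ᗮ := Finset.sup_le fun k hk y hy ↦
    Submodule.mem_orthogonal_singleton_iff_inner_right.2 <|
      orthogonal (i := n) (j := k) (by rintro rfl; exact hn hk) ⟨x, hx⟩ ⟨y, hy⟩
  rw [Submodule.starProjection_apply_eq_zero_iff]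
  exact fun y hy ↦ Submodule.mem_orthogonal_singleton_iff_inner_left.1 (le hy)

theorem isCompactOperator_of_graded [CompleteSpace F] [∀ n, FiniteDimensional ℂ (V n)]
    (orthogonal : OrthogonalFamily ℂ (fun n ↦ V n) fun n ↦ (V n).subtypeₗᵢ)
    (dense : (⨆ n, V n).topologicalClosure = ⊤) (h : ∀ n, ∀ x ∈ V n, A x = c n • B x)
    (hc : Tendsto c atTop (𝓝 0)) : IsCompactOperator A := by
  refine isClosed_setOfPred_isCompactOperator.closure_subset
    (Metric.mem_closure_iff.2 fun δ hδ ↦ ?_)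
  obtain ⟨m, hm⟩ := Metric.tendsto_atTop.1 hc (δ / (‖B‖ + 1)) (by positivity)
  set W := (Finset.range m).sup V
  have : FiniteDimensional ℂ W := Submodule.finiteDimensional_finset_sup _ _
  refine ⟨A ∘L W.starProjection, (isCompactOperator_starProjection W).clm_comp A, ?_⟩
  let d : ℕ → ℂ := fun n ↦ if n < m then 0 else c n
  have graded (n : ℕ) (x : H) (hx : x ∈ V n) : (A - A ∘L W.starProjection) x = d n • B x := by
    rcases lt_or_ge n m with hn | hn
    · simp [d, hn, W, starProjection_finset_sup_of_mem (Finset.mem_range.2 hn) hx]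
    · simp [d, hn.not_gt, W, h n x hx, starProjection_finset_sup_of_notMem orthogonal
        (Finset.mem_range.not.2 hn.not_gt) hx]
  have small (n : ℕ) : ‖d n‖ ≤ δ / (‖B‖ + 1) := by
    rcases lt_or_ge n m with hn | hn
    · simp only [d, if_pos hn, norm_zero]; positivity
    · simpa [d, hn.not_gt] using (hm n hn).le
  calc dist A (A ∘L W.starProjection) ≤ ‖B‖ * (δ / (‖B‖ + 1)) := by
        rw [dist_eq_norm]
        exact opNorm_le_of_graded orthogonal dense graded (by positivity) small
    _ < δ := by
        rw [← mul_div_assoc, div_lt_iff₀ (by positivity)]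
        linarith

end Graded

section AdjointCompSelf

variable {H F : Type*} [NormedAddCommGroup H] [InnerProductSpace ℂ H] [CompleteSpace H]
  [NormedAddCommGroup F] [InnerProductSpace ℂ F] [CompleteSpace F]

lemma norm_apply_sq_le_norm_adjoint_comp_self_apply (A : H →L[ℂ] F) (x : H) :
    ‖A x‖ ^ 2 ≤ ‖(A.adjoint ∘L A) x‖ * ‖x‖ := by
  rw [A.apply_norm_sq_eq_inner_adjoint_left]
  exact (RCLike.re_le_norm _).trans (norm_inner_le_norm _ _)

lemma isCompactOperator_of_adjoint_comp_self {A : H →L[ℂ] F}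
    (h : IsCompactOperator (A.adjoint ∘L A)) : IsCompactOperator A := by
  refine (isCompactOperator_iff_isCompact_closure_image_closedBall (A : H →ₗ[ℂ] F) one_pos).2 ?_
  refine (Metric.totallyBounded_iff.2 fun ε hε ↦ ?_).closure.isCompact_of_isClosed isClosed_closure
  have totallyBounded := (h.isCompact_closure_image_closedBall 1).totallyBounded.subset
    subset_closure
  obtain ⟨t, ht, finite, cover⟩ := exists_subset_image_finite_and.1
    (finite_approx_of_totallyBounded totallyBounded (ε ^ 2 / 2) (by positivity))
  refine ⟨A '' t, finite.image A, ?_⟩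
  rintro - ⟨x, hx, rfl⟩
  obtain ⟨-, ⟨y, hy, rfl⟩, hxy⟩ := mem_iUnion₂.1 (cover ⟨x, hx, rfl⟩)
  refine mem_iUnion₂.2 ⟨A y, ⟨y, hy, rfl⟩, ?_⟩
  have hxy_norm : ‖x - y‖ ≤ 2 := by
    have := norm_sub_le x y
    have := mem_closedBall_zero_iff.1 hx
    have := mem_closedBall_zero_iff.1 (ht hy)
    linarith
  have close : ‖(A.adjoint ∘L A) (x - y)‖ < ε ^ 2 / 2 := by
    simpa [dist_eq_norm] using hxy
  have : ‖A (x - y)‖ ^ 2 < ε ^ 2 := by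
    have := norm_apply_sq_le_norm_adjoint_comp_self_apply A (x - y)
    nlinarith [norm_nonneg (x - y), norm_nonneg ((A.adjoint ∘L A) (x - y))]
  simpa [dist_eq_norm] using lt_of_pow_lt_pow_left₀ 2 hε.le this

end AdjointCompSelf

section OneVariable

lemma iteratedDeriv_comp_mul_left (f : ℂ → ℂ) (c : ℂ) (n : ℕ) :
    iteratedDeriv n (fun x ↦ f (c * x)) = fun x ↦ c ^ n * iteratedDeriv n f (c * x) := by
  induction n with
  | zero => simp
  | succ n ih =>
    funext x
    rw [iteratedDeriv_succ, ih, iteratedDeriv_succ, deriv_const_mul_field,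
      deriv_comp_mul_left c (iteratedDeriv n f) x, smul_eq_mul]
    ring

lemma contDiffAt_zero_of_differentiableOn_ball {F : ℂ → ℂ} {R : ℝ} (hR : 0 < R)
    (hF : DifferentiableOn ℂ F (ball 0 R)) {n : WithTop ℕ∞} : ContDiffAt ℂ n F 0 :=
  (hF.analyticAt (ball_mem_nhds 0 hR)).contDiffAt

lemma iteratedDeriv_eq_of_mul_deriv_add_eq {G K : ℂ → ℂ} {t : ℂ} {R : ℝ} (hR : 0 < R)
    (hG : DifferentiableOn ℂ G (ball 0 R)) (h : ∀ x ∈ ball 0 R, x * deriv G x + t * G x = K x)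
    (n : ℕ) : (n + t) * iteratedDeriv n G 0 = iteratedDeriv n K 0 := by
  have hK : K =ᶠ[𝓝 0] fun x ↦ x * deriv G x + t * G x := by
    filter_upwards [ball_mem_nhds (0 : ℂ) hR] with x hx using (h x hx).symm
  have smooth_id : ContDiffAt ℂ n (fun x : ℂ ↦ x) 0 := contDiffAt_id
  have smooth_deriv : ContDiffAt ℂ n (deriv G) 0 :=
    contDiffAt_zero_of_differentiableOn_ball hR (hG.deriv isOpen_ball)
  have smooth : ContDiffAt ℂ n G 0 := contDiffAt_zero_of_differentiableOn_ball hR hG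
  have leibniz : iteratedDeriv n (fun x ↦ x * deriv G x) 0 = n * iteratedDeriv n G 0 := by
    rw [iteratedDeriv_fun_mul smooth_id smooth_deriv]
    rcases n with _ | n
    · simp
    · rw [Finset.sum_eq_single 1 (fun b _ hb ↦ by simp [iteratedDeriv_fun_id_zero, hb]) (by simp)]
      simp [iteratedDeriv_fun_id_zero, iteratedDeriv_succ']
  rw [hK.iteratedDeriv_eq, iteratedDeriv_fun_add (smooth_id.mul smooth_deriv)
    (contDiffAt_const.mul smooth), iteratedDeriv_const_mul_field, leibniz, add_mul]

lemma eqOn_zero_of_iteratedDeriv_eq_zero {F : ℂ → ℂ} {R : ℝ}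
    (hF : DifferentiableOn ℂ F (ball 0 R)) (h : ∀ n, iteratedDeriv n F 0 = 0) :
    EqOn F 0 (ball 0 R) := by
  intro x hx
  have taylor := Complex.hasSum_taylorSeries_on_ball hF hx
  simp only [h, smul_zero] at taylor
  exact taylor.unique hasSum_zero

end OneVariable

namespace BallFunctionSpace

variable {N : ℕ} {t : ℝ} {μ : Measure (EuclideanSpace ℂ (Fin N))} (S : BallFunctionSpace N t μ)

section Jets

/-- Evaluation at `z`, as a linear functional. -/
def evalₗ (z : EuclideanSpace ℂ (Fin N)) : S.H →ₗ[ℂ] ℂ where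
  toFun u := S.eval u z
  map_add' u v := S.eval_add u v z
  map_smul' c u := S.eval_smul c u z

lemma eval_zero (z : EuclideanSpace ℂ (Fin N)) : S.eval 0 z = 0 :=
  map_zero (S.evalₗ z)

variable {w x z : EuclideanSpace ℂ (Fin N)}

lemma smul_mem_ball (hw : w ∈ Ball N) {l : ℂ} (hl : ‖l‖ ≤ 1) : l • w ∈ Ball N := by
  rw [mem_ball_zero_iff] at *
  rw [norm_smul]
  nlinarith [norm_nonneg l, norm_nonneg w]

lemma exists_closedBall_line_subset (hw : w ∈ Ball N) (x : EuclideanSpace ℂ (Fin N)) :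
    ∃ R > 0, ∀ l ∈ closedBall (0 : ℂ) R, w + l • x ∈ Ball N := by
  have continuous : ContinuousAt (fun l : ℂ ↦ w + l • x) 0 := by fun_prop
  exact Metric.nhds_basis_closedBall.mem_iff.1
    (continuous.preimage_mem_nhds (isOpen_ball.mem_nhds (by simpa using hw)))

lemma differentiableOn_eval_line (u : S.H) {s : Set ℂ} (h : ∀ l ∈ s, w + l • x ∈ Ball N) :
    DifferentiableOn ℂ (fun l ↦ S.eval u (w + l • x)) s :=
  (S.holo u).comp (by fun_prop : Differentiable ℂ fun l : ℂ ↦ w + l • x).differentiableOn h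

lemma differentiableOn_eval_smul (u : S.H) (hw : w ∈ Ball N) :
    DifferentiableOn ℂ (fun l : ℂ ↦ S.eval u (l • w)) (ball 0 1) := by
  simpa using S.differentiableOn_eval_line u (w := 0) (x := w) (s := ball 0 1) fun l hl ↦ by
    simpa using smul_mem_ball hw (mem_ball_zero_iff.1 hl).le

lemma exists_norm_eval_le {L : Set (EuclideanSpace ℂ (Fin N))} (hL : IsCompact L)
    (hLB : L ⊆ Ball N) : ∃ C : ℝ, ∀ u, ∀ z ∈ L, ‖S.eval u z‖ ≤ C * ‖u‖ := by
  obtain ⟨C, hC⟩ := banach_steinhaus (g := fun z : L ↦ innerSL ℂ (S.kernel z)) fun u ↦ by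
    obtain ⟨C, hC⟩ := hL.exists_bound_of_continuousOn ((S.holo u).continuousOn.mono hLB)
    exact ⟨C, fun z ↦ by
      simpa only [innerSL_apply_apply, S.reproducing u z (hLB z.2)] using hC z z.2⟩
  refine ⟨C, fun u z hz ↦ ?_⟩
  simpa only [innerSL_apply_apply, S.reproducing u z (hLB hz)] using
    (innerSL ℂ (S.kernel z)).le_of_opNorm_le (hC ⟨z, hz⟩) u

lemma exists_norm_iteratedDeriv_eval_le (n : ℕ) (hw : w ∈ Ball N)
    (x : EuclideanSpace ℂ (Fin N)) :
    ∃ C : ℝ, ∀ u, ‖iteratedDeriv n (fun l : ℂ ↦ S.eval u (w + l • x)) 0‖ ≤ C * ‖u‖ := by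
  obtain ⟨R, hR, hline⟩ := exists_closedBall_line_subset hw x
  obtain ⟨C, hC⟩ := S.exists_norm_eval_le
    ((isCompact_closedBall (0 : ℂ) R).image (by fun_prop : Continuous fun l ↦ w + l • x))
    (image_subset_iff.2 hline)
  refine ⟨n.factorial * C / R ^ n, fun u ↦ ?_⟩
  have differentiable := S.differentiableOn_eval_line u hline
  refine (Complex.norm_iteratedDeriv_le_of_forall_mem_sphere_norm_le n hR (C := C * ‖u‖)
    ⟨differentiable.mono ball_subset_closedBall, ?_⟩ fun l hl ↦ ?_).trans_eq (by ring)
  · rw [closure_ball _ hR.ne']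
    exact differentiable.continuousOn
  · exact hC u _ (mem_image_of_mem _ (sphere_subset_closedBall hl))

lemma contDiffAt_eval_line (u : S.H) (hw : w ∈ Ball N) {n : WithTop ℕ∞} :
    ContDiffAt ℂ n (fun l : ℂ ↦ S.eval u (w + l • x)) 0 := by
  obtain ⟨R, hR, hline⟩ := exists_closedBall_line_subset hw x
  exact contDiffAt_zero_of_differentiableOn_ball hR
    ((S.differentiableOn_eval_line u hline).mono ball_subset_closedBall)

lemma exists_inner_eq_iteratedDeriv (n : ℕ) (hw : w ∈ Ball N) (x : EuclideanSpace ℂ (Fin N)) :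
    ∃ p : S.H, ∀ u, ⟪p, u⟫ = iteratedDeriv n (fun l : ℂ ↦ S.eval u (w + l • x)) 0 := by
  obtain ⟨C, hC⟩ := S.exists_norm_iteratedDeriv_eval_le n hw x
  let derivative : S.H →ₗ[ℂ] ℂ :=
    { toFun u := iteratedDeriv n (fun l : ℂ ↦ S.eval u (w + l • x)) 0
      map_add' u v := by
        simp only [S.eval_add]
        exact iteratedDeriv_fun_add (S.contDiffAt_eval_line u hw) (S.contDiffAt_eval_line v hw)
      map_smul' c u := by simp [S.eval_smul] }
  refine ⟨(InnerProductSpace.toDual ℂ S.H).symm (derivative.mkContinuous C hC), fun u ↦ ?_⟩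
  rw [InnerProductSpace.toDual_symm_apply]
  rfl

open Classical in
/-- The vector representing the `n`-th derivative at `w` in the direction `x`; it is `0` for `w`
outside the ball. -/
def jet (n : ℕ) (w x : EuclideanSpace ℂ (Fin N)) : S.H :=
  if hw : w ∈ Ball N then (S.exists_inner_eq_iteratedDeriv n hw x).choose else 0

lemma inner_jet (n : ℕ) (hw : w ∈ Ball N) (x : EuclideanSpace ℂ (Fin N)) (u : S.H) :
    ⟪S.jet n w x, u⟫ = iteratedDeriv n (fun l : ℂ ↦ S.eval u (w + l • x)) 0 := by
  rw [jet, dif_pos hw]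
  exact (S.exists_inner_eq_iteratedDeriv n hw x).choose_spec u

lemma inner_jet_zero (n : ℕ) (x : EuclideanSpace ℂ (Fin N)) (u : S.H) :
    ⟪S.jet n 0 x, u⟫ = iteratedDeriv n (fun l : ℂ ↦ S.eval u (l • x)) 0 := by
  simpa using S.inner_jet n (mem_ball_self one_pos) x u

lemma eq_zero_of_forall_inner_jet_zero {u : S.H}
    (h : ∀ n, ∀ w ∈ Ball N, ⟪S.jet n 0 w, u⟫ = 0) : u = 0 := by
  refine S.eval_injective _ _ fun z hz ↦ ?_
  obtain ⟨r, hzr, hr⟩ := exists_between (mem_ball_zero_iff.1 hz)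
  have r_pos : 0 < r := (norm_nonneg z).trans_lt hzr
  have hw : (r : ℂ)⁻¹ • z ∈ Ball N := by
    rw [mem_ball_zero_iff, norm_smul, norm_inv, Complex.norm_real, Real.norm_of_nonneg r_pos.le,
      inv_mul_lt_iff₀ r_pos, mul_one]
    exact hzr
  have vanish := eqOn_zero_of_iteratedDeriv_eq_zero (S.differentiableOn_eval_smul u hw)
    (fun n ↦ by rw [← inner_jet_zero, h n _ hw])
    (show (r : ℂ) ∈ ball 0 1 by simpa [abs_of_pos r_pos] using hr)
  simpa only [smul_inv_smul₀ (Complex.ofReal_ne_zero.2 r_pos.ne'), Pi.zero_apply, S.eval_zero]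
    using vanish

end Jets

section Kernels

variable {w z : EuclideanSpace ℂ (Fin N)}

lemma norm_inner_lt_one (hw : w ∈ Ball N) (hz : z ∈ closedBall 0 1) : ‖⟪w, z⟫‖ < 1 := by
  rw [mem_ball_zero_iff] at hw
  rw [mem_closedBall_zero_iff] at hz
  refine (norm_inner_le_norm w z).trans_lt ?_
  nlinarith [norm_nonneg w, norm_nonneg z]

lemma one_sub_mem_slitPlane {c : ℂ} (hc : ‖c‖ < 1) : 1 - c ∈ Complex.slitPlane :=
  Complex.mem_slitPlane_of_norm_lt_one (z := -c) (by simpa using hc)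

lemma eval_kernel_symm (hw : w ∈ Ball N) (hz : z ∈ Ball N) :
    S.eval (S.kernel w) z = conj (S.eval (S.kernel z) w) := by
  rw [← S.reproducing _ z hz, ← S.reproducing _ w hw, inner_conj_symm]

lemma eval_jet (n : ℕ) (hw : w ∈ Ball N) (hz : z ∈ Ball N) (x : EuclideanSpace ℂ (Fin N)) :
    S.eval (S.jet n w x) z =
      conj (iteratedDeriv n (fun l : ℂ ↦ (1 - ⟪z, w + l • x⟫) ^ (-(t : ℂ))) 0) := by
  rw [← S.reproducing _ z hz, ← inner_conj_symm, S.inner_jet n hw]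
  congr 1
  apply Filter.EventuallyEq.iteratedDeriv_eq
  obtain ⟨R, hR, hline⟩ := exists_closedBall_line_subset hw x
  filter_upwards [closedBall_mem_nhds (0 : ℂ) hR] with l hl
  exact S.eval_kernel z hz _ (hline l hl)

lemma exists_eval_jet_zero_eq (n : ℕ) :
    ∃ c : ℂ, ∀ w, ∀ z ∈ Ball N, S.eval (S.jet n 0 w) z = c * ⟪w, z⟫ ^ n := by
  refine ⟨conj (iteratedDeriv n (fun l : ℂ ↦ (1 - l) ^ (-(t : ℂ))) 0), fun w z hz ↦ ?_⟩
  rw [S.eval_jet n (mem_ball_self one_pos) hz]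
  simp only [zero_add, inner_smul_right, mul_comm _ ⟪z, w⟫]
  rw [iteratedDeriv_comp_mul_left (fun l ↦ (1 - l) ^ (-(t : ℂ)))]
  simp [mul_comm]

lemma eval_jet_one (hw : w ∈ Ball N) (hz : z ∈ Ball N) (x : EuclideanSpace ℂ (Fin N)) :
    S.eval (S.jet 1 w x) z = t * ⟪x, z⟫ * conj ((1 - ⟪z, w⟫) ^ (-(t : ℂ) - 1)) := by
  rw [S.eval_jet 1 hw hz, iteratedDeriv_one]
  have inner_line : HasDerivAt (fun l : ℂ ↦ 1 - ⟪z, w + l • x⟫) (-⟪z, x⟫) 0 := by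
    simp only [inner_add_right, inner_smul_right]
    simpa using (((hasDerivAt_id (0 : ℂ)).mul_const ⟪z, x⟫).const_add ⟪z, w⟫).const_sub 1
  have slit : 1 - ⟪z, w + (0 : ℂ) • x⟫ ∈ Complex.slitPlane := by
    simpa using one_sub_mem_slitPlane (norm_inner_lt_one hz (ball_subset_closedBall hw))
  rw [(inner_line.cpow_const slit).deriv]
  simp
  ring

/-- The vector representing `u ↦ (R + t) u (w)`, with `R` the radial derivative. As a function it
is `t` times the reproducing kernel of parameter `t + 1`. -/
def radialVector (w : EuclideanSpace ℂ (Fin N)) : S.H :=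
  S.jet 1 w w + (t : ℂ) • S.kernel w

lemma eval_radialVector (hw : w ∈ Ball N) (hz : z ∈ Ball N) :
    S.eval (S.radialVector w) z = t * conj ((1 - ⟪z, w⟫) ^ (-(t : ℂ) - 1)) := by
  have ne_zero : (1 - ⟪z, w⟫ : ℂ) ≠ 0 := Complex.slitPlane_ne_zero
    (one_sub_mem_slitPlane (norm_inner_lt_one hz (ball_subset_closedBall hw)))
  have cpow_eq : (1 - ⟪z, w⟫ : ℂ) ^ (-(t : ℂ)) = (1 - ⟪z, w⟫) ^ (-(t : ℂ) - 1) * (1 - ⟪z, w⟫) := by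
    rw [Complex.cpow_sub _ _ ne_zero, Complex.cpow_one, div_mul_cancel₀ _ ne_zero]
  rw [radialVector, S.eval_add, S.eval_smul, S.eval_jet_one hw hz, S.eval_kernel_symm hw hz,
    S.eval_kernel z hz w hw, cpow_eq]
  simp only [map_mul, map_sub, map_one, inner_conj_symm]
  ring

lemma eval_jet_one_eq_mul (hw : w ∈ Ball N) (hz : z ∈ Ball N) (x : EuclideanSpace ℂ (Fin N)) :
    S.eval (S.jet 1 w x) z = ⟪x, z⟫ * S.eval (S.radialVector w) z := by
  rw [S.eval_jet_one hw hz, S.eval_radialVector hw hz]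
  ring

lemma inner_radialVector (hw : w ∈ Ball N) (u : S.H) :
    ⟪S.radialVector w, u⟫ = deriv (fun l : ℂ ↦ S.eval u (w + l • w)) 0 + t * S.eval u w := by
  rw [radialVector, inner_add_left, S.inner_jet 1 hw, iteratedDeriv_one, inner_smul_left,
    S.reproducing u w hw, Complex.conj_ofReal]

lemma mul_deriv_eval_smul_add (u : S.H) (hw : w ∈ Ball N) {l : ℂ} (hl : l ∈ ball (0 : ℂ) 1) :
    l * deriv (fun l : ℂ ↦ S.eval u (l • w)) l + t * S.eval u (l • w) =
      ⟪S.radialVector (l • w), u⟫ := by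
  rw [S.inner_radialVector (smul_mem_ball hw (mem_ball_zero_iff.1 hl).le)]
  congr 1
  set G : ℂ → ℂ := fun l ↦ S.eval u (l • w) with hG
  have reparam : (fun m : ℂ ↦ S.eval u (l • w + m • l • w)) = fun m ↦ G (l + l * m) := by
    funext m
    simp only [hG, add_smul, smul_smul, mul_comm]
  rw [reparam, deriv_comp_mul_left l (fun y ↦ G (l + y)) 0, deriv_comp_const_add]
  simp

/- The Taylor coefficients of `u` along the disc through `w` satisfy the recursion that the
differential equation `l G' + t G = K` imposes. -/
lemma inner_jet_zero_eq_of_inner_radialVector {u v : S.H}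
    (h : ∀ w ∈ Ball N, ⟪S.radialVector w, u⟫ = S.eval v w) (n : ℕ) (hw : w ∈ Ball N) :
    (n + t : ℂ) * ⟪S.jet n 0 w, u⟫ = ⟪S.jet n 0 w, v⟫ := by
  rw [S.inner_jet_zero, S.inner_jet_zero]
  refine iteratedDeriv_eq_of_mul_deriv_add_eq one_pos (S.differentiableOn_eval_smul u hw)
    (fun l hl ↦ ?_) n
  rw [S.mul_deriv_eval_smul_add u hw hl, h _ (smul_mem_ball hw (mem_ball_zero_iff.1 hl).le)]

lemma eq_zero_of_forall_inner_radialVector (ht : 0 < t) {u : S.H}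
    (h : ∀ w ∈ Ball N, ⟪S.radialVector w, u⟫ = 0) : u = 0 := by
  refine S.eq_zero_of_forall_inner_jet_zero fun n w hw ↦ ?_
  have recursion := S.inner_jet_zero_eq_of_inner_radialVector (u := u) (v := 0)
    (by simpa [S.eval_zero] using h) n hw
  have ne_zero : (n + t : ℂ) ≠ 0 := by
    exact_mod_cast (by positivity : (0 : ℝ) < n + t).ne'
  simpa [ne_zero] using recursion

lemma eq_zero_of_forall_inner_kernel {u : S.H} (h : ∀ w ∈ Ball N, ⟪S.kernel w, u⟫ = 0) :
    u = 0 :=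
  S.eval_injective _ _ fun z hz ↦ by rw [← S.reproducing u z hz, h z hz, S.eval_zero]

end Kernels

end BallFunctionSpace

section Multiplication

variable {X : Type*} [TopologicalSpace X] [CompactSpace X] [MeasurableSpace X] [BorelSpace X]
  (ν : Measure X) [IsFiniteMeasure ν]

lemma coeFn_holderL_mul_toLp (b : C(X, ℂ)) (u : Lp ℂ 2 ν) :
    (ContinuousLinearMap.mul ℂ ℂ).holderL ν ⊤ 2 2 (ContinuousMap.toLp ⊤ ν ℂ b) u =ᵐ[ν]
      fun x ↦ b x * u x := by
  filter_upwards [(ContinuousLinearMap.mul ℂ ℂ).coeFn_holder (r := 2)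
    (ContinuousMap.toLp ⊤ ν ℂ b) u, ContinuousMap.coeFn_toLp ν (p := ⊤) (𝕜 := ℂ) b] with x hx hb
  rw [ContinuousLinearMap.holderL_apply_apply, hx, hb, ContinuousLinearMap.mul_apply']

/-- The representation of `C(X, ℂ)` by multiplication operators on `L²(ν)`. -/
def multiplication : C(X, ℂ) →A[ℂ] (Lp ℂ 2 ν →L[ℂ] Lp ℂ 2 ν) where
  __ := AlgHom.ofLinearMap
    ((ContinuousLinearMap.mul ℂ ℂ).holderL ν ⊤ 2 2 ∘L ContinuousMap.toLp ⊤ ν ℂ).toLinearMap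
    (by
      refine ContinuousLinearMap.ext fun u ↦ Lp.ext ?_
      filter_upwards [coeFn_holderL_mul_toLp ν 1 u] with x hx
      simpa using hx)
    (fun a b ↦ by
      refine ContinuousLinearMap.ext fun u ↦ Lp.ext ?_
      filter_upwards [coeFn_holderL_mul_toLp ν (a * b) u, coeFn_holderL_mul_toLp ν b u,
        coeFn_holderL_mul_toLp ν a
          ((ContinuousLinearMap.mul ℂ ℂ).holderL ν ⊤ 2 2 (ContinuousMap.toLp ⊤ ν ℂ b) u)]
        with x hab hb ha
      simp only [ContinuousLinearMap.coe_coe, ContinuousLinearMap.comp_apply,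
        mul_apply_eq_comp]
      rw [hab, ha, hb, ContinuousMap.mul_apply, mul_assoc])
  cont := ((ContinuousLinearMap.mul ℂ ℂ).holderL ν ⊤ 2 2 ∘L ContinuousMap.toLp ⊤ ν ℂ).continuous

lemma coeFn_multiplication (b : C(X, ℂ)) (u : Lp ℂ 2 ν) :
    multiplication ν b u =ᵐ[ν] fun x ↦ b x * u x :=
  coeFn_holderL_mul_toLp ν b u

lemma multiplication_toLp (b g : C(X, ℂ)) :
    multiplication ν b (ContinuousMap.toLp 2 ν ℂ g) = ContinuousMap.toLp 2 ν ℂ (b * g) := by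
  refine Lp.ext ?_
  filter_upwards [coeFn_multiplication ν b (ContinuousMap.toLp 2 ν ℂ g),
    ContinuousMap.coeFn_toLp ν (p := 2) (𝕜 := ℂ) g,
    ContinuousMap.coeFn_toLp ν (p := 2) (𝕜 := ℂ) (b * g)] with x hb hg hbg
  rw [hb, hg, hbg, ContinuousMap.mul_apply]

lemma adjoint_multiplication (b : C(X, ℂ)) :
    (multiplication ν b).adjoint = multiplication ν (star b) := by
  refine (ContinuousLinearMap.eq_adjoint_iff _ _).2 (fun u v ↦ ?_) |>.symm
  rw [L2.inner_def, L2.inner_def]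
  refine integral_congr_ae ?_
  filter_upwards [coeFn_multiplication ν (star b) u, coeFn_multiplication ν b v] with x hu hv
  simp only [hu, hv, RCLike.inner_apply, ContinuousMap.star_apply, RCLike.star_def, map_mul,
    Complex.conj_conj]
  ring

end Multiplication

section Total

variable {H : Type*} [NormedAddCommGroup H] [InnerProductSpace ℂ H] [CompleteSpace H]

lemma topologicalClosure_span_image_eq_top {ι : Type*} {g : ι → H} {s : Set ι}
    (total : ∀ u, (∀ i ∈ s, ⟪g i, u⟫ = 0) → u = 0) :
    (Submodule.span ℂ (g '' s)).topologicalClosure = ⊤ := by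
  rw [Submodule.topologicalClosure_eq_top_iff, Submodule.eq_bot_iff]
  intro u hu
  exact total u fun i hi ↦
    (Submodule.mem_orthogonal _ _).1 hu _ (Submodule.subset_span (mem_image_of_mem g hi))

end Total

section LimitIsometry

variable {𝕜 E F ι : Type*} [NontriviallyNormedField 𝕜] [NormedAddCommGroup E] [NormedSpace 𝕜 E]
  [NormedAddCommGroup F] [NormedSpace 𝕜 F] {D : ι → E →ₗ[𝕜] F} {l : Filter ι}

/-- The vectors along which a family of linear maps converges. -/
def convergenceSubmodule (D : ι → E →ₗ[𝕜] F) (l : Filter ι) : Submodule 𝕜 E where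
  carrier := {u | ∃ v, Tendsto (fun i ↦ D i u) l (𝓝 v)}
  zero_mem' := ⟨0, by simpa using tendsto_const_nhds⟩
  add_mem' := by
    rintro u v ⟨x, hx⟩ ⟨y, hy⟩
    exact ⟨x + y, by simpa using hx.add hy⟩
  smul_mem' := by
    rintro c u ⟨x, hx⟩
    exact ⟨c • x, by simpa using hx.const_smul c⟩

lemma isClosed_convergenceSubmodule [CompleteSpace F] [l.NeBot]
    (norm : ∀ u, Tendsto (fun i ↦ ‖D i u‖) l (𝓝 ‖u‖)) :
    IsClosed (convergenceSubmodule D l : Set E) := by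
  refine isClosed_of_closure_subset fun u hu ↦ cauchy_map_iff_exists_tendsto.1 ?_
  refine Metric.cauchy_iff.2 ⟨inferInstance, fun ε hε ↦ ?_⟩
  obtain ⟨v, ⟨y, hy⟩, huv⟩ := Metric.mem_closure_iff.1 hu (ε / 4) (by positivity)
  rw [dist_eq_norm] at huv
  refine ⟨ball y (ε / 2), mem_map.2 ?_, fun a ha b hb ↦ ?_⟩
  · filter_upwards [(norm (u - v)).eventually_lt_const huv,
      hy.eventually (ball_mem_nhds y (by positivity : 0 < ε / 4))] with i hi hiv
    rw [map_sub] at hi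
    calc dist (D i u) y ≤ dist (D i u) (D i v) + dist (D i v) y := dist_triangle _ _ _
      _ < ε / 4 + ε / 4 := add_lt_add (by rwa [dist_eq_norm]) hiv
      _ = ε / 2 := by ring
  · calc dist a b ≤ dist a y + dist b y := dist_triangle_right _ _ _
      _ < ε / 2 + ε / 2 := add_lt_add ha hb
      _ = ε := by ring

theorem exists_linearIsometry_of_tendsto_norm [CompleteSpace F] [l.NeBot]
    (norm : ∀ u, Tendsto (fun i ↦ ‖D i u‖) l (𝓝 ‖u‖)) {s : Set E}
    (dense : (Submodule.span 𝕜 s).topologicalClosure = ⊤)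
    (h : ∀ u ∈ s, ∃ v, Tendsto (fun i ↦ D i u) l (𝓝 v)) :
    ∃ V : E →ₗᵢ[𝕜] F, ∀ u, Tendsto (fun i ↦ D i u) l (𝓝 (V u)) := by
  have converges (u : E) : u ∈ convergenceSubmodule D l :=
    Submodule.topologicalClosure_minimal _
      (Submodule.span_le.2 h : Submodule.span 𝕜 s ≤ convergenceSubmodule D l)
      (isClosed_convergenceSubmodule norm) (dense ▸ Submodule.mem_top)
  choose V hV using converges
  refine ⟨⟨{ toFun := V, map_add' := fun u v ↦ ?_, map_smul' := fun c u ↦ ?_ }, fun u ↦ ?_⟩, hV⟩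
  · exact tendsto_nhds_unique (hV (u + v)) (by simpa using (hV u).add (hV v))
  · exact tendsto_nhds_unique (hV (c • u)) (by simpa using (hV u).const_smul c)
  · exact tendsto_nhds_unique (hV u).norm (norm u)

end LimitIsometry

section Dilation

/-- `n / (n + 1)`, the radii along which boundary values are taken. -/
def dilationRadius (n : ℕ) : unitInterval :=
  ⟨n / (n + 1), by positivity, div_le_one_of_le₀ (by simp) (by positivity)⟩

lemma dilationRadius_lt_one (n : ℕ) : (dilationRadius n : ℝ) < 1 :=
  (div_lt_one (by positivity)).2 (lt_add_one _)

lemma tendsto_dilationRadius : Tendsto dilationRadius atTop (𝓝 1) :=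
  tendsto_subtype_rng.2 (tendsto_natCast_div_add_atTop 1)

lemma tendsto_dilationRadius_nhdsLT :
    Tendsto (fun n ↦ (dilationRadius n : ℝ)) atTop (𝓝[<] 1) :=
  tendsto_nhdsWithin_iff.2
    ⟨tendsto_natCast_div_add_atTop 1, .of_forall dilationRadius_lt_one⟩

variable {N : ℕ} {K : TopologicalSpace.Compacts (EuclideanSpace ℂ (Fin N))}

lemma smul_mem_ball_of_lt_one {r : unitInterval} (hr : (r : ℝ) < 1)
    {z : EuclideanSpace ℂ (Fin N)} (hz : z ∈ closedBall 0 1) : (r : ℝ) • z ∈ Ball N := by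
  rw [mem_closedBall_zero_iff] at hz
  rw [mem_ball_zero_iff, norm_smul, Real.norm_of_nonneg r.2.1]
  nlinarith [r.2.1]

lemma dilationRadius_smul_mem_ball (n : ℕ) {z : EuclideanSpace ℂ (Fin N)}
    (hz : z ∈ closedBall 0 1) : (dilationRadius n : ℝ) • z ∈ Ball N :=
  smul_mem_ball_of_lt_one (dilationRadius_lt_one n) hz

variable (hK : (K : Set (EuclideanSpace ℂ (Fin N))) ⊆ closedBall 0 1)
  {g : EuclideanSpace ℂ (Fin N) → ℂ}

include hK in
lemma continuous_dilation (hg : ContinuousOn g (closedBall 0 1)) :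
    Continuous fun p : unitInterval × K ↦ g ((p.1 : ℝ) • (p.2 : EuclideanSpace ℂ (Fin N))) :=
  hg.comp_continuous (by fun_prop) fun p ↦ by
    rw [mem_closedBall_zero_iff, norm_smul, Real.norm_of_nonneg p.1.2.1]
    exact mul_le_one₀ p.1.2.2 (norm_nonneg _) (mem_closedBall_zero_iff.1 (hK p.2.2))

/-- The path `r ↦ (z ↦ g (r z))`, `0 ≤ r ≤ 1`, of dilates of `g` restricted to `K`. -/
def dilationPath (hg : ContinuousOn g (closedBall 0 1)) : C(unitInterval, C(K, ℂ)) :=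
  ContinuousMap.curry ⟨_, continuous_dilation hK hg⟩

lemma tendsto_dilationPath (hg : ContinuousOn g (closedBall 0 1)) :
    Tendsto (fun n ↦ dilationPath hK hg (dilationRadius n)) atTop (𝓝 (dilationPath hK hg 1)) :=
  (map_continuous (dilationPath hK hg)).continuousAt.tendsto.comp tendsto_dilationRadius

end Dilation

/-- The compact subset `K` of the closed unit ball has full measure for `μ`. -/
structure IsCarriedBy {N : ℕ} (μ : Measure (EuclideanSpace ℂ (Fin N)))
    (K : TopologicalSpace.Compacts (EuclideanSpace ℂ (Fin N))) : Prop where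
  subset_closedBall : (K : Set (EuclideanSpace ℂ (Fin N))) ⊆ closedBall 0 1
  measure_compl : μ (K : Set (EuclideanSpace ℂ (Fin N)))ᶜ = 0

/-- `L²(μ)`, on a compact set carrying `μ`. -/
abbrev L2On {N : ℕ} (μ : Measure (EuclideanSpace ℂ (Fin N)))
    (K : TopologicalSpace.Compacts (EuclideanSpace ℂ (Fin N))) : Type :=
  Lp ℂ 2 (μ.comap ((↑) : K → EuclideanSpace ℂ (Fin N)))

namespace IsCarriedBy

variable {N : ℕ} {μ : Measure (EuclideanSpace ℂ (Fin N))}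
  {K : TopologicalSpace.Compacts (EuclideanSpace ℂ (Fin N))} (hK : IsCarriedBy μ K)
include hK

lemma ae_mem : ∀ᵐ z ∂μ, z ∈ K :=
  hK.measure_compl

lemma integral_comap_coe (g : EuclideanSpace ℂ (Fin N) → ℂ) :
    ∫ z : K, g z ∂μ.comap ((↑) : K → EuclideanSpace ℂ (Fin N)) = ∫ z, g z ∂μ := by
  have restrict : μ.restrict K = μ := Measure.restrict_eq_self_of_ae_mem hK.ae_mem
  exact (integral_subtype_comap K.isCompact.measurableSet g).trans (by rw [restrict])

lemma ae_smul_mem_ball {r : ℝ} (hr : r ∈ Ico 0 1) : ∀ᵐ z ∂μ, r • z ∈ Ball N := by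
  filter_upwards [hK.ae_mem] with z hz
  exact smul_mem_ball_of_lt_one (r := ⟨r, hr.1, hr.2.le⟩) hr.2 (hK.subset_closedBall hz)

end IsCarriedBy

namespace BallFunctionSpace

variable {N : ℕ} {t : ℝ} {μ : Measure (EuclideanSpace ℂ (Fin N))} (S : BallFunctionSpace N t μ)
  {K : TopologicalSpace.Compacts (EuclideanSpace ℂ (Fin N))}

section FiniteMeasure

lemma eval_kernel_zero {z : EuclideanSpace ℂ (Fin N)} (hz : z ∈ Ball N) :
    S.eval (S.kernel 0) z = 1 := by
  rw [S.eval_kernel 0 (mem_ball_self one_pos) z hz]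
  simp

/- The constant function `1` lies in the space and has norm `1`, whereas its integral against an
infinite measure would be the junk value `0`. -/
include S in
lemma isFiniteMeasure (hK : IsCarriedBy μ K) : IsFiniteMeasure μ := by
  have zero_mem : (0 : EuclideanSpace ℂ (Fin N)) ∈ Ball N := mem_ball_self one_pos
  have norm_one := S.inner_eq (S.kernel 0) (S.kernel 0)
  rw [S.reproducing _ 0 zero_mem, S.eval_kernel_zero zero_mem] at norm_one
  by_contra infinite
  have integral_one : ∫ _, (1 : ℂ) ∂μ = 0 :=
    integral_undef fun h ↦ infinite ((integrable_const_iff_isFiniteMeasure one_ne_zero).1 h)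
  refine one_ne_zero (tendsto_nhds_unique norm_one (tendsto_const_nhds.congr' ?_))
  filter_upwards [Ico_mem_nhdsLT one_pos] with r hr
  rw [← integral_one]
  refine integral_congr_ae ?_
  filter_upwards [hK.ae_smul_mem_ball hr] with z hz
  simp [S.eval_kernel_zero hz]

end FiniteMeasure

section BoundaryValue

variable (hK : (K : Set (EuclideanSpace ℂ (Fin N))) ⊆ closedBall 0 1)

/-- The dilates `z ↦ u (r z)`, `r = n / (n + 1)`, as continuous functions on `K`. -/
def dilate (n : ℕ) : S.H →ₗ[ℂ] C(K, ℂ) where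
  toFun u := ⟨fun z ↦ S.eval u ((dilationRadius n : ℝ) • (z : EuclideanSpace ℂ (Fin N))),
    (S.holo u).continuousOn.comp_continuous (by fun_prop) fun z ↦
      dilationRadius_smul_mem_ball n (hK z.2)⟩
  map_add' u v := ContinuousMap.ext fun z ↦ S.eval_add u v _
  map_smul' c u := ContinuousMap.ext fun z ↦ S.eval_smul c u _

lemma dilate_apply (n : ℕ) (u : S.H) (z : K) :
    S.dilate hK n u z = S.eval u ((dilationRadius n : ℝ) • (z : EuclideanSpace ℂ (Fin N))) :=
  rfl

variable {g : EuclideanSpace ℂ (Fin N) → ℂ} (hg : ContinuousOn g (closedBall 0 1))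

lemma dilate_eq_dilationPath {u : S.H} (h : ∀ z ∈ Ball N, S.eval u z = g z) (n : ℕ) :
    S.dilate hK n u = dilationPath hK hg (dilationRadius n) :=
  ContinuousMap.ext fun z ↦ h _ (dilationRadius_smul_mem_ball n (hK z.2))

lemma dilate_eq_dilationPath_mul {u v : S.H} (h : ∀ z ∈ Ball N, S.eval v z = g z * S.eval u z)
    (n : ℕ) : S.dilate hK n v = dilationPath hK hg (dilationRadius n) * S.dilate hK n u :=
  ContinuousMap.ext fun z ↦ h _ (dilationRadius_smul_mem_ball n (hK z.2))

lemma continuousOn_eval_kernel {w : EuclideanSpace ℂ (Fin N)} (hw : w ∈ Ball N) :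
    ContinuousOn (fun z ↦ (1 - ⟪w, z⟫) ^ (-(t : ℂ))) (closedBall 0 1) :=
  ContinuousOn.cpow_const (by fun_prop) fun _ hz ↦
    one_sub_mem_slitPlane (norm_inner_lt_one hw hz)

lemma topologicalClosure_span_kernel :
    (Submodule.span ℂ (S.kernel '' Ball N)).topologicalClosure = ⊤ :=
  topologicalClosure_span_image_eq_top fun _ ↦ S.eq_zero_of_forall_inner_kernel

end BoundaryValue

end BallFunctionSpace

namespace BallFunctionSpace

variable {N : ℕ} {t : ℝ} {μ : Measure (EuclideanSpace ℂ (Fin N))} (S : BallFunctionSpace N t μ)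
  {K : TopologicalSpace.Compacts (EuclideanSpace ℂ (Fin N))} [IsFiniteMeasure μ]
  (hK : IsCarriedBy μ K)

section BoundaryValue

/-- The dilates of `u` as elements of `L²(μ)`; they converge to the boundary value of `u`. -/
def dilateL2 (n : ℕ) : S.H →ₗ[ℂ] L2On μ K :=
  (ContinuousMap.toLp 2 _ ℂ).toLinearMap ∘ₗ S.dilate hK.subset_closedBall n

lemma inner_dilateL2_multiplication {b₀ : EuclideanSpace ℂ (Fin N) → ℂ} {b : C(K, ℂ)}
    (hb : ∀ z : K, b₀ z = b z) (u v : S.H) (n : ℕ) :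
    ⟪S.dilateL2 hK n v, multiplication _ b (S.dilateL2 hK n u)⟫ =
      ∫ z, conj (S.eval v ((dilationRadius n : ℝ) • z)) * b₀ z *
        S.eval u ((dilationRadius n : ℝ) • z) ∂μ := by
  rw [← hK.integral_comap_coe]
  simp only [dilateL2, LinearMap.comp_apply, ContinuousLinearMap.coe_coe]
  rw [multiplication_toLp, ContinuousMap.inner_toLp]
  refine integral_congr_ae (.of_forall fun z ↦ ?_)
  simp only [ContinuousMap.mul_apply, dilate_apply, hb]
  ring

lemma tendsto_norm_dilateL2 (u : S.H) :
    Tendsto (fun n ↦ ‖S.dilateL2 hK n u‖) atTop (𝓝 ‖u‖) := by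
  have norm_eq (n : ℕ) := S.inner_dilateL2_multiplication hK (b₀ := 1) (b := 1) (by simp) u u n
  have tendsto_inner : Tendsto (fun n ↦ ⟪S.dilateL2 hK n u, S.dilateL2 hK n u⟫) atTop
      (𝓝 ⟪u, u⟫) := by
    refine ((S.inner_eq u u).comp tendsto_dilationRadius_nhdsLT).congr fun n ↦ ?_
    simpa using (norm_eq n).symm
  simp only [inner_self_eq_norm_sq_to_K] at tendsto_inner
  simpa using tendsto_inner.norm.sqrt

lemma tendsto_dilateL2_of_eval_eq {g : EuclideanSpace ℂ (Fin N) → ℂ}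
    (hg : ContinuousOn g (closedBall 0 1)) {u : S.H} (h : ∀ z ∈ Ball N, S.eval u z = g z) :
    Tendsto (fun n ↦ S.dilateL2 hK n u) atTop
      (𝓝 (ContinuousMap.toLp 2 _ ℂ (dilationPath hK.subset_closedBall hg 1))) := by
  refine Tendsto.congr (fun n ↦ ?_) (((ContinuousMap.toLp 2 _ ℂ).continuous.tendsto _).comp
    (tendsto_dilationPath hK.subset_closedBall hg))
  rw [dilateL2, LinearMap.comp_apply, S.dilate_eq_dilationPath _ hg h]
  rfl

lemma exists_boundaryValue :
    ∃ V : S.H →ₗᵢ[ℂ] L2On μ K, ∀ u, Tendsto (fun n ↦ S.dilateL2 hK n u) atTop (𝓝 (V u)) :=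
  exists_linearIsometry_of_tendsto_norm (S.tendsto_norm_dilateL2 hK)
    S.topologicalClosure_span_kernel <| forall_mem_image.2 fun w hw ↦
      ⟨_, S.tendsto_dilateL2_of_eval_eq hK (continuousOn_eval_kernel hw) (S.eval_kernel w hw)⟩

/-- The isometric embedding into `L²(μ)` that takes a function to its boundary values, the limit
of its dilates. -/
def boundaryValue : S.H →ₗᵢ[ℂ] L2On μ K :=
  (S.exists_boundaryValue hK).choose

lemma tendsto_dilateL2 (u : S.H) :
    Tendsto (fun n ↦ S.dilateL2 hK n u) atTop (𝓝 (S.boundaryValue hK u)) :=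
  (S.exists_boundaryValue hK).choose_spec u

theorem boundaryValue_eq_multiplication {g : EuclideanSpace ℂ (Fin N) → ℂ}
    (hg : ContinuousOn g (closedBall 0 1)) {b : C(K, ℂ)} (hb : ∀ z : K, g z = b z) {u v : S.H}
    (h : ∀ z ∈ Ball N, S.eval v z = g z * S.eval u z) :
    S.boundaryValue hK v = multiplication _ b (S.boundaryValue hK u) := by
  have endpoint : dilationPath hK.subset_closedBall hg 1 = b :=
    ContinuousMap.ext fun z ↦ by simp [dilationPath, hb]
  have tendsto_symbol : Tendsto (fun n ↦ multiplication (μ.comap ((↑) : K → _))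
      (dilationPath hK.subset_closedBall hg (dilationRadius n))) atTop (𝓝 (multiplication _ b)) :=
    ((multiplication _).continuous.tendsto _).comp
      (endpoint ▸ tendsto_dilationPath hK.subset_closedBall hg)
  refine tendsto_nhds_unique (S.tendsto_dilateL2 hK v)
    (((isBoundedBilinearMap_apply.continuous.tendsto _).comp
      (tendsto_symbol.prodMk_nhds (S.tendsto_dilateL2 hK u))).congr fun n ↦ ?_)
  rw [Function.comp_apply, dilateL2, LinearMap.comp_apply, LinearMap.comp_apply,
    S.dilate_eq_dilationPath_mul _ hg h]
  exact multiplication_toLp _ _ _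

end BoundaryValue

section Toeplitz

/-- The orthogonal projection of `L²(μ)` onto the space, the adjoint of the embedding. -/
def projection : L2On μ K →L[ℂ] S.H :=
  (S.boundaryValue hK).toContinuousLinearMap.adjoint

lemma inner_projection (u : S.H) (f : L2On μ K) :
    ⟪u, S.projection hK f⟫ = ⟪S.boundaryValue hK u, f⟫ :=
  ContinuousLinearMap.adjoint_inner_right (S.boundaryValue hK).toContinuousLinearMap u f

lemma projection_boundaryValue (u : S.H) : S.projection hK (S.boundaryValue hK u) = u :=
  ext_inner_left ℂ fun v ↦ by rw [inner_projection, LinearIsometry.inner_map_map]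

/-- The Toeplitz operator `T_b = P M_b V`, with `V` the embedding into `L²(μ)` and `P` the
projection onto the space, as a function of its symbol. -/
def toeplitz : C(K, ℂ) →L[ℂ] S.H →L[ℂ] S.H where
  toFun b := S.projection hK ∘L multiplication _ b ∘L (S.boundaryValue hK).toContinuousLinearMap
  map_add' a b := by simp
  map_smul' c b := by simp

lemma toeplitz_apply (b : C(K, ℂ)) (u : S.H) :
    S.toeplitz hK b u = S.projection hK (multiplication _ b (S.boundaryValue hK u)) :=
  rfl

lemma inner_toeplitz (b : C(K, ℂ)) (u v : S.H) :
    ⟪v, S.toeplitz hK b u⟫ =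
      ⟪S.boundaryValue hK v, multiplication _ b (S.boundaryValue hK u)⟫ := by
  rw [toeplitz_apply, inner_projection]

variable {S} in
theorem IsToeplitzOperator.eq_toeplitz {b₀ : EuclideanSpace ℂ (Fin N) → ℂ}
    {T : S.H →L[ℂ] S.H} (hT : S.IsToeplitzOperator b₀ T) {b : C(K, ℂ)}
    (hb : ∀ z : K, b₀ z = b z) : T = S.toeplitz hK b := by
  refine ContinuousLinearMap.ext fun u ↦ ext_inner_left ℂ fun v ↦ ?_
  rw [inner_toeplitz]
  refine tendsto_nhds_unique ((hT u v).comp tendsto_dilationRadius_nhdsLT) ?_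
  refine ((S.tendsto_dilateL2 hK v).inner (((multiplication _ b).continuous.tendsto _).comp
    (S.tendsto_dilateL2 hK u))).congr fun n ↦ ?_
  exact S.inner_dilateL2_multiplication hK hb u v n

lemma adjoint_toeplitz (b : C(K, ℂ)) :
    (S.toeplitz hK b).adjoint = S.toeplitz hK (star b) := by
  refine ((ContinuousLinearMap.eq_adjoint_iff _ _).2 fun u v ↦ ?_).symm
  rw [inner_toeplitz, ← inner_conj_symm, inner_toeplitz, inner_conj_symm, ← adjoint_multiplication,
    ContinuousLinearMap.adjoint_inner_left]

lemma toeplitz_apply_eq_of_eval_eq {g : EuclideanSpace ℂ (Fin N) → ℂ}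
    (hg : ContinuousOn g (closedBall 0 1)) {b : C(K, ℂ)} (hb : ∀ z : K, g z = b z) {u v : S.H}
    (h : ∀ z ∈ Ball N, S.eval v z = g z * S.eval u z) : S.toeplitz hK b u = v := by
  rw [toeplitz_apply, ← S.boundaryValue_eq_multiplication hK hg hb h, projection_boundaryValue]

end Toeplitz

end BallFunctionSpace

namespace BallFunctionSpace

variable {N : ℕ} {t : ℝ} {μ : Measure (EuclideanSpace ℂ (Fin N))} (S : BallFunctionSpace N t μ)

section HomogeneousPart

/-- The homogeneous polynomials of degree `n` in the space, as the span of the `n`-th derivative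
functionals at the origin. -/
def homogeneousPart (n : ℕ) : Submodule ℂ S.H :=
  Submodule.span ℂ (S.jet n 0 '' Ball N)

/-- Functions in the space, restricted to the ball. -/
def evalOnBall : S.H →ₗ[ℂ] (Ball N → ℂ) :=
  LinearMap.pi fun z ↦ S.evalₗ z

lemma evalOnBall_injective : Function.Injective S.evalOnBall := fun u v h ↦
  S.eval_injective u v fun z hz ↦ congrFun h ⟨z, hz⟩

lemma inner_mem_span_coordinates (w : EuclideanSpace ℂ (Fin N)) :
    (fun z : Ball N ↦ ⟪w, (z : EuclideanSpace ℂ (Fin N))⟫) ∈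
      Submodule.span ℂ (range fun (i : Fin N) (z : Ball N) ↦ (z : EuclideanSpace ℂ (Fin N)) i) := by
  have expansion : (fun z : Ball N ↦ ⟪w, (z : EuclideanSpace ℂ (Fin N))⟫) =
      ∑ i, conj (w i) • fun z : Ball N ↦ (z : EuclideanSpace ℂ (Fin N)) i := by
    funext z
    simp [PiLp.inner_apply, mul_comm]
  rw [expansion]
  exact Submodule.sum_mem _ fun i _ ↦ Submodule.smul_mem _ _ (Submodule.subset_span ⟨i, rfl⟩)

instance finiteDimensional_homogeneousPart (n : ℕ) :
    FiniteDimensional ℂ (S.homogeneousPart n) := by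
  let W : Submodule ℂ (Ball N → ℂ) :=
    Submodule.span ℂ (range fun (i : Fin N) (z : Ball N) ↦ (z : EuclideanSpace ℂ (Fin N)) i) ^ n
  have : FiniteDimensional ℂ W :=
    Module.Finite.iff_fg.2 (Submodule.FG.pow (Submodule.fg_span (finite_range _)) n)
  have le_comap : S.homogeneousPart n ≤ W.comap S.evalOnBall := by
    obtain ⟨c, hc⟩ := S.exists_eval_jet_zero_eq n
    refine Submodule.span_le.2 (image_subset_iff.2 fun w _ ↦ ?_)
    have eval_eq : S.evalOnBall (S.jet n 0 w) =
        c • (fun z : Ball N ↦ ⟪w, (z : EuclideanSpace ℂ (Fin N))⟫) ^ n :=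
      funext fun z ↦ hc w z z.2
    rw [mem_preimage, SetLike.mem_coe, Submodule.mem_comap, eval_eq]
    exact Submodule.smul_mem _ _ (Submodule.pow_mem_pow _ (inner_mem_span_coordinates w) n)
  exact FiniteDimensional.of_injective (S.evalOnBall.restrict le_comap) fun u v h ↦
    Subtype.ext (S.evalOnBall_injective (congrArg Subtype.val h))

lemma inner_jet_zero_jet_zero_of_ne {m n : ℕ} (hmn : m ≠ n) {w : EuclideanSpace ℂ (Fin N)}
    (hw : w ∈ Ball N) (x : EuclideanSpace ℂ (Fin N)) : ⟪S.jet m 0 w, S.jet n 0 x⟫ = 0 := by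
  obtain ⟨c, hc⟩ := S.exists_eval_jet_zero_eq n
  have monomial : (fun l : ℂ ↦ S.eval (S.jet n 0 x) (l • w)) =ᶠ[𝓝 0]
      fun l ↦ c * ⟪x, w⟫ ^ n * l ^ n := by
    filter_upwards [ball_mem_nhds (0 : ℂ) one_pos] with l hl
    rw [hc x _ (smul_mem_ball hw (mem_ball_zero_iff.1 hl).le), inner_smul_right]
    ring
  rw [S.inner_jet_zero, monomial.iteratedDeriv_eq, iteratedDeriv_const_mul_field,
    iteratedDeriv_fun_pow_zero, if_neg hmn, Nat.cast_zero, mul_zero]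

lemma orthogonalFamily_homogeneousPart :
    OrthogonalFamily ℂ (fun n ↦ S.homogeneousPart n) fun n ↦ (S.homogeneousPart n).subtypeₗᵢ := by
  refine OrthogonalFamily.of_pairwise fun m n hmn ↦ Submodule.isOrtho_span.2 ?_
  rintro - ⟨w, hw, rfl⟩ - ⟨x, -, rfl⟩
  exact S.inner_jet_zero_jet_zero_of_ne hmn hw x

lemma topologicalClosure_iSup_homogeneousPart :
    (⨆ n, S.homogeneousPart n).topologicalClosure = ⊤ := by
  refine Submodule.topologicalClosure_eq_top_iff.2 ((Submodule.eq_bot_iff _).2 fun u hu ↦ ?_)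
  refine S.eq_zero_of_forall_inner_jet_zero fun n w hw ↦ (Submodule.mem_orthogonal _ _).1 hu _ ?_
  exact Submodule.mem_iSup_of_mem n (Submodule.subset_span (mem_image_of_mem _ hw))

variable {F : Type*} [NormedAddCommGroup F] [InnerProductSpace ℂ F] [CompleteSpace F]
  {A B : S.H →L[ℂ] F}

lemma apply_jet_zero_of_apply_radialVector_eq
    (h : ∀ w ∈ Ball N, A (S.radialVector w) = B (S.kernel w)) (n : ℕ)
    {w : EuclideanSpace ℂ (Fin N)} (hw : w ∈ Ball N) :
    (n + t : ℂ) • A (S.jet n 0 w) = B (S.jet n 0 w) := by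
  refine ext_inner_right ℂ fun v ↦ ?_
  have adjoint_eq (x : EuclideanSpace ℂ (Fin N)) (hx : x ∈ Ball N) :
      ⟪S.radialVector x, A.adjoint v⟫ = S.eval (B.adjoint v) x := by
    rw [ContinuousLinearMap.adjoint_inner_right, h x hx, ← S.reproducing _ x hx,
      ContinuousLinearMap.adjoint_inner_right]
  have recursion := S.inner_jet_zero_eq_of_inner_radialVector adjoint_eq n hw
  rw [ContinuousLinearMap.adjoint_inner_right, ContinuousLinearMap.adjoint_inner_right]
    at recursion
  simpa [inner_smul_left] using recursion

/-- In the grading by degree, passing from kernels to radial vectors multiplies by the factor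
`n + t`, so that `A` is `B` damped by `(n + t)⁻¹`. -/
theorem isCompactOperator_of_apply_radialVector_eq (ht : 0 < t)
    (h : ∀ w ∈ Ball N, A (S.radialVector w) = B (S.kernel w)) : IsCompactOperator A := by
  have ne_zero (n : ℕ) : (n + t : ℂ) ≠ 0 := by
    exact_mod_cast (by positivity : (0 : ℝ) < n + t).ne'
  refine isCompactOperator_of_graded (B := B) (c := fun n ↦ (n + t : ℂ)⁻¹)
    S.orthogonalFamily_homogeneousPart S.topologicalClosure_iSup_homogeneousPart
    (fun n ↦ ?_) ?_
  · refine LinearMap.eqOn_span' (f := (A : S.H →ₗ[ℂ] F)) (g := (n + t : ℂ)⁻¹ • (B : S.H →ₗ[ℂ] F))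
      (forall_mem_image.2 fun w hw ↦ ?_)
    exact (eq_inv_smul_iff₀ (ne_zero n)).2 (S.apply_jet_zero_of_apply_radialVector_eq h n hw)
  · have : Tendsto (fun n : ℕ ↦ ((n + t : ℝ) : ℂ)⁻¹) atTop (𝓝 0) := by
      simpa using ((tendsto_atTop_add_const_right _ t
        tendsto_natCast_atTop_atTop).inv_tendsto_atTop.ofReal)
    exact_mod_cast this

end HomogeneousPart

lemma topologicalClosure_span_radialVector (ht : 0 < t) :
    (Submodule.span ℂ (S.radialVector '' Ball N)).topologicalClosure = ⊤ :=
  topologicalClosure_span_image_eq_top fun _ ↦ S.eq_zero_of_forall_inner_radialVector ht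

end BallFunctionSpace

/-- The coordinate function `z ↦ z j` on `K`. -/
def coordinate {N : ℕ} {K : TopologicalSpace.Compacts (EuclideanSpace ℂ (Fin N))} (j : Fin N) :
    C(K, ℂ) :=
  ⟨fun z ↦ (z : EuclideanSpace ℂ (Fin N)) j, by fun_prop⟩

lemma coordinate_separates {N : ℕ} {K : TopologicalSpace.Compacts (EuclideanSpace ℂ (Fin N))}
    (x y : K) (h : ∀ j : Fin N, coordinate j x = coordinate j y) : x = y :=
  Subtype.ext (PiLp.ext h)

namespace BallFunctionSpace

variable {N : ℕ} {t : ℝ} {μ : Measure (EuclideanSpace ℂ (Fin N))} (S : BallFunctionSpace N t μ)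
  {K : TopologicalSpace.Compacts (EuclideanSpace ℂ (Fin N))} [IsFiniteMeasure μ]
  (hK : IsCarriedBy μ K)

section ToeplitzCoordinate

variable {w : EuclideanSpace ℂ (Fin N)} (j : Fin N)

lemma toeplitz_coordinate_radialVector (hw : w ∈ Ball N) :
    S.toeplitz hK (coordinate j) (S.radialVector w) = S.jet 1 w (EuclideanSpace.single j 1) :=
  S.toeplitz_apply_eq_of_eval_eq hK (g := fun z ↦ z j) (by fun_prop) (fun _ ↦ rfl) fun z hz ↦ by
    rw [S.eval_jet_one_eq_mul hw hz, EuclideanSpace.inner_single_left, map_one, one_mul]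

/-- Multiplication by a coordinate preserves the space: this is clear on the radial vectors, which
are total. -/
theorem eval_toeplitz_coordinate (ht : 0 < t) (hw : w ∈ Ball N) (u : S.H) :
    S.eval (S.toeplitz hK (coordinate j) u) w = w j * S.eval u w := by
  have on_radialVector : ∀ x ∈ Ball N,
      S.eval (S.toeplitz hK (coordinate j) (S.radialVector x)) w =
        w j * S.eval (S.radialVector x) w := fun x hx ↦ by
    rw [toeplitz_coordinate_radialVector S hK j hx, S.eval_jet_one_eq_mul hx hw,
      EuclideanSpace.inner_single_left, map_one, one_mul]
  have functionals_eq : innerSL ℂ (S.kernel w) ∘L S.toeplitz hK (coordinate j) =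
      w j • innerSL ℂ (S.kernel w) := by
    refine ContinuousLinearMap.ext_on (Submodule.dense_iff_topologicalClosure_eq_top.2
      (S.topologicalClosure_span_radialVector ht)) (forall_mem_image.2 fun x hx ↦ ?_)
    simpa [S.reproducing _ w hw] using on_radialVector x hx
  simpa [S.reproducing _ w hw] using DFunLike.congr_fun functionals_eq u

lemma boundaryValue_toeplitz_coordinate (ht : 0 < t) (u : S.H) :
    S.boundaryValue hK (S.toeplitz hK (coordinate j) u) =
      multiplication _ (coordinate j) (S.boundaryValue hK u) :=
  S.boundaryValue_eq_multiplication hK (g := fun z ↦ z j) (by fun_prop) (fun _ ↦ rfl)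
    fun _ hz ↦ S.eval_toeplitz_coordinate hK j ht hz u

lemma adjoint_toeplitz_coordinate_kernel (ht : 0 < t) (hw : w ∈ Ball N) :
    (S.toeplitz hK (coordinate j)).adjoint (S.kernel w) = conj (w j) • S.kernel w := by
  refine ext_inner_right ℂ fun u ↦ ?_
  rw [ContinuousLinearMap.adjoint_inner_left, S.reproducing _ w hw,
    S.eval_toeplitz_coordinate hK j ht hw, inner_smul_left, Complex.conj_conj,
    S.reproducing _ w hw]

lemma adjoint_toeplitz_coordinate_jet_one (ht : 0 < t) (hw : w ∈ Ball N)
    (x : EuclideanSpace ℂ (Fin N)) :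
    (S.toeplitz hK (coordinate j)).adjoint (S.jet 1 w x) =
      conj (x j) • S.kernel w + conj (w j) • S.jet 1 w x := by
  refine ext_inner_right ℂ fun u ↦ ?_
  have coordinate_deriv : HasDerivAt (fun l : ℂ ↦ (w + l • x) j) (x j) 0 := by
    simpa using ((hasDerivAt_id (0 : ℂ)).mul_const (x j)).const_add (w j)
  have eval_differentiable : DifferentiableAt ℂ (fun l : ℂ ↦ S.eval u (w + l • x)) 0 :=
    (S.contDiffAt_eval_line u hw).differentiableAt one_ne_zero
  have product : (fun l : ℂ ↦ S.eval (S.toeplitz hK (coordinate j) u) (w + l • x)) =ᶠ[𝓝 0]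
      (fun l : ℂ ↦ (w + l • x) j) * fun l ↦ S.eval u (w + l • x) := by
    obtain ⟨R, hR, hline⟩ := exists_closedBall_line_subset hw x
    filter_upwards [closedBall_mem_nhds (0 : ℂ) hR] with l hl
    exact S.eval_toeplitz_coordinate hK j ht (hline l hl) u
  rw [ContinuousLinearMap.adjoint_inner_left, S.inner_jet 1 hw, iteratedDeriv_one,
    product.deriv_eq, (coordinate_deriv.mul eval_differentiable.hasDerivAt).deriv,
    inner_add_left, inner_smul_left, inner_smul_left, Complex.conj_conj, Complex.conj_conj,
    S.reproducing _ w hw, S.inner_jet 1 hw, iteratedDeriv_one]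
  simp

lemma adjoint_toeplitz_coordinate_radialVector (ht : 0 < t) (hw : w ∈ Ball N) :
    (S.toeplitz hK (coordinate j)).adjoint (S.radialVector w) =
      conj (w j) • S.radialVector w + conj (w j) • S.kernel w := by
  rw [radialVector, map_add, map_smul, S.adjoint_toeplitz_coordinate_jet_one hK j ht hw,
    S.adjoint_toeplitz_coordinate_kernel hK j ht hw]
  module

theorem isCompactOperator_selfCommutator_toeplitz_coordinate (ht : 0 < t) :
    IsCompactOperator ((S.toeplitz hK (coordinate j)).adjoint ∘L S.toeplitz hK (coordinate j) -
      S.toeplitz hK (coordinate j) ∘L (S.toeplitz hK (coordinate j)).adjoint) := by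
  refine S.isCompactOperator_of_apply_radialVector_eq ht (B := ContinuousLinearMap.id ℂ S.H -
    S.toeplitz hK (coordinate j) ∘L (S.toeplitz hK (coordinate j)).adjoint) fun w hw ↦ ?_
  simp only [sub_apply, ContinuousLinearMap.comp_apply, ContinuousLinearMap.id_apply]
  rw [S.adjoint_toeplitz_coordinate_radialVector hK j ht hw,
    S.adjoint_toeplitz_coordinate_kernel hK j ht hw, map_add, map_smul, map_smul,
    S.toeplitz_coordinate_radialVector hK j hw,
    S.adjoint_toeplitz_coordinate_jet_one hK j ht hw, PiLp.single_apply, if_pos rfl, map_one]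
  module

end ToeplitzCoordinate

section Hankel

/-- The Hankel operator `H_b = (1 - V P) M_b V`, as a function of its symbol. -/
def hankel : C(K, ℂ) →L[ℂ] S.H →L[ℂ] L2On μ K where
  toFun b := multiplication _ b ∘L (S.boundaryValue hK).toContinuousLinearMap -
    (S.boundaryValue hK).toContinuousLinearMap ∘L S.toeplitz hK b
  map_add' a b := by simp; abel
  map_smul' c b := by simp [smul_sub]

lemma hankel_apply (b : C(K, ℂ)) (u : S.H) :
    S.hankel hK b u = multiplication _ b (S.boundaryValue hK u) -
      S.boundaryValue hK (S.toeplitz hK b u) :=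
  rfl

lemma multiplication_boundaryValue (b : C(K, ℂ)) (u : S.H) :
    multiplication _ b (S.boundaryValue hK u) =
      S.boundaryValue hK (S.toeplitz hK b u) + S.hankel hK b u := by
  rw [hankel_apply, add_sub_cancel]

lemma toeplitz_one : S.toeplitz hK 1 = 1 :=
  ContinuousLinearMap.ext fun u ↦ by
    rw [toeplitz_apply, map_one, one_apply_eq_self, projection_boundaryValue, one_apply_eq_self]

lemma toeplitz_mul (a b : C(K, ℂ)) :
    S.toeplitz hK (a * b) = S.toeplitz hK a ∘L S.toeplitz hK b +
      (S.projection hK ∘L multiplication _ a) ∘L S.hankel hK b := by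
  refine ContinuousLinearMap.ext fun u ↦ ?_
  rw [toeplitz_apply, map_mul, mul_apply_eq_comp, multiplication_boundaryValue, map_add, map_add]
  rfl

lemma hankel_mul (a b : C(K, ℂ)) :
    S.hankel hK (a * b) = S.hankel hK a ∘L S.toeplitz hK b +
      ((ContinuousLinearMap.id ℂ (L2On μ K) -
        (S.boundaryValue hK).toContinuousLinearMap ∘L S.projection hK) ∘L
          multiplication _ a) ∘L S.hankel hK b := by
  refine ContinuousLinearMap.ext fun u ↦ ?_
  rw [hankel_apply, toeplitz_mul, map_mul, mul_apply_eq_comp, multiplication_boundaryValue, map_add,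
    multiplication_boundaryValue]
  simp only [add_apply, sub_apply, ContinuousLinearMap.comp_apply, map_add,
    ContinuousLinearMap.sub_comp, ContinuousLinearMap.id_comp,
    LinearIsometry.coe_toContinuousLinearMap]
  abel

lemma projection_hankel (b : C(K, ℂ)) (u : S.H) : S.projection hK (S.hankel hK b u) = 0 := by
  rw [hankel_apply, map_sub, projection_boundaryValue, toeplitz_apply, sub_self]

lemma adjoint_hankel_comp_hankel (b : C(K, ℂ)) :
    (S.hankel hK b).adjoint ∘L S.hankel hK b =
      (S.projection hK ∘L multiplication _ (star b)) ∘L S.hankel hK b := by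
  refine ContinuousLinearMap.ext fun u ↦ ext_inner_left ℂ fun v ↦ ?_
  rw [ContinuousLinearMap.comp_apply, ContinuousLinearMap.adjoint_inner_right, hankel_apply,
    inner_sub_left, ← inner_projection, projection_hankel, inner_zero_right, sub_zero,
    ContinuousLinearMap.comp_apply, ContinuousLinearMap.comp_apply, inner_projection,
    ← adjoint_multiplication, ContinuousLinearMap.adjoint_inner_right]

lemma hankel_coordinate (ht : 0 < t) (j : Fin N) : S.hankel hK (coordinate j) = 0 :=
  ContinuousLinearMap.ext fun u ↦ by
    rw [hankel_apply, boundaryValue_toeplitz_coordinate S hK j ht, sub_self, zero_apply]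

lemma isCompactOperator_hankel_star_coordinate (ht : 0 < t) (j : Fin N) :
    IsCompactOperator (S.hankel hK (star (coordinate j))) := by
  have selfCommutator : (S.hankel hK (star (coordinate j))).adjoint ∘L
        S.hankel hK (star (coordinate j)) =
      (S.toeplitz hK (coordinate j)).adjoint ∘L S.toeplitz hK (coordinate j) -
        S.toeplitz hK (coordinate j) ∘L (S.toeplitz hK (coordinate j)).adjoint := by
    have mul_star := S.toeplitz_mul hK (coordinate j) (star (coordinate j))
    have star_mul := S.toeplitz_mul hK (star (coordinate j)) (coordinate j)
    rw [hankel_coordinate S hK ht] at star_mul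
    rw [adjoint_hankel_comp_hankel, star_star, adjoint_toeplitz, eq_sub_iff_add_eq', ← mul_star,
      mul_comm, star_mul]
    simp
  refine isCompactOperator_of_adjoint_comp_self ?_
  rw [selfCommutator]
  exact S.isCompactOperator_selfCommutator_toeplitz_coordinate hK j ht

/-- The symbols whose Hankel operator is compact. -/
def compactHankelSymbols : Subalgebra ℂ C(K, ℂ) where
  carrier := {b | IsCompactOperator (S.hankel hK b)}
  mul_mem' {a b} ha hb := by
    rw [mem_ofPred_eq, hankel_mul, FunLike.coe_add, ContinuousLinearMap.coe_comp,
      ContinuousLinearMap.coe_comp]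
    exact (ha.comp_clm _).add (hb.clm_comp _)
  add_mem' ha hb := by
    rw [mem_ofPred_eq, map_add]
    exact ha.add hb
  algebraMap_mem' c := by
    have hankel_one : S.hankel hK 1 = 0 := ContinuousLinearMap.ext fun u ↦ by
      simp [hankel_apply, toeplitz_one]
    rw [mem_ofPred_eq, Algebra.algebraMap_eq_smul_one, map_smul, hankel_one, smul_zero]
    exact isCompactOperator_zero

theorem isCompactOperator_hankel (ht : 0 < t) (b : C(K, ℂ)) :
    IsCompactOperator (S.hankel hK b) := by
  have closed : IsClosed (S.compactHankelSymbols hK : Set C(K, ℂ)) :=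
    isClosed_setOfPred_isCompactOperator.preimage (S.hankel hK).continuous
  have top : S.compactHankelSymbols hK = ⊤ :=
    subalgebra_eq_top_of_isClosed_of_separates _ closed coordinate coordinate_separates
      (fun j ↦ by
        change IsCompactOperator _
        rw [hankel_coordinate S hK ht]
        exact isCompactOperator_zero)
      (S.isCompactOperator_hankel_star_coordinate hK ht)
  exact (top ▸ Algebra.mem_top : b ∈ S.compactHankelSymbols hK)

end Hankel

section Calkin

/-- The representation of `C(K, ℂ)` in the Calkin algebra by Toeplitz operators, for `t > 0`. -/
def toeplitzCalkin (ht : 0 < t) : C(K, ℂ) →A[ℂ] CalkinAlgebra S.H where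
  toFun b := toCalkin (S.toeplitz hK b)
  map_one' := by rw [toeplitz_one, map_one]
  map_mul' a b := by
    rw [← map_mul, toCalkin_eq_iff, toeplitz_mul, ContinuousLinearMap.mul_def,
      add_sub_cancel_left]
    exact (S.isCompactOperator_hankel hK ht b).clm_comp (S.projection hK ∘L multiplication _ a)
  map_zero' := by rw [map_zero, map_zero]
  map_add' a b := by rw [map_add, map_add]
  commutes' c := by
    rw [Algebra.algebraMap_eq_smul_one, map_smul, map_smul, toeplitz_one, map_one,
      ← Algebra.algebraMap_eq_smul_one]
  cont := (continuous_toCalkin (E := S.H)).comp (S.toeplitz hK).continuous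

lemma toeplitzCalkin_apply (ht : 0 < t) (b : C(K, ℂ)) :
    S.toeplitzCalkin hK ht b = toCalkin (S.toeplitz hK b) :=
  rfl

variable {φ : EuclideanSpace ℂ (Fin N) → EuclideanSpace ℂ (Fin N)} {C : S.H →L[ℂ] S.H}

lemma comp_toeplitz_coordinate (ht : 0 < t) (φ_cont : ContinuousOn φ (closedBall 0 1))
    (φ_ball : MapsTo φ (Ball N) (Ball N)) (φK : C(K, K)) (hφK : ∀ z : K, (φK z : _) = φ z)
    (hC : S.IsCompositionOperator φ C) (j : Fin N) :
    C ∘L S.toeplitz hK (coordinate j) = S.toeplitz hK ((coordinate j).comp φK) ∘L C := by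
  refine ContinuousLinearMap.ext fun u ↦ ?_
  rw [ContinuousLinearMap.comp_apply, ContinuousLinearMap.comp_apply]
  have coordinate_cont : ContinuousOn (fun z ↦ φ z j) (closedBall 0 1) :=
    (EuclideanSpace.proj (𝕜 := ℂ) j).continuous.comp_continuousOn φ_cont
  refine (S.toeplitz_apply_eq_of_eval_eq hK coordinate_cont (fun z ↦ ?_) fun z hz ↦ ?_).symm
  · rw [ContinuousMap.comp_apply, coordinate, ContinuousMap.coe_mk, hφK]
  · rw [hC _ z hz, hC _ z hz, S.eval_toeplitz_coordinate hK j ht (φ_ball hz)]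

theorem isCompactOperator_comp_toeplitz_sub (ht : 0 < t) (φ_cont : ContinuousOn φ (closedBall 0 1))
    (φ_ball : MapsTo φ (Ball N) (Ball N)) (φK : C(K, K)) (hφK : ∀ z : K, (φK z : _) = φ z)
    (hC : S.IsCompositionOperator φ C) (b : C(K, ℂ)) :
    IsCompactOperator (C ∘L S.toeplitz hK b - S.toeplitz hK (b.comp φK) ∘L C) := by
  have semiconj := semiconjBy_map_of_separates (c := toCalkin C) (S.toeplitzCalkin hK ht)
    ((S.toeplitzCalkin hK ht).comp ⟨ContinuousMap.compRightAlgHom ℂ ℂ φK, φK.continuous_precomp⟩)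
    coordinate coordinate_separates (fun j ↦ ?_) b
  · rw [← toCalkin_eq_iff, ← ContinuousLinearMap.mul_def, ← ContinuousLinearMap.mul_def, map_mul,
      map_mul]
    exact semiconj
  · rw [SemiconjBy, ContinuousAlgHom.comp_apply, toeplitzCalkin_apply, toeplitzCalkin_apply,
      ← map_mul, ← map_mul, ContinuousLinearMap.mul_def,
      S.comp_toeplitz_coordinate hK ht φ_cont φ_ball φK hφK hC]
    rfl

end Calkin

end BallFunctionSpace

namespace BallFunctionSpace

variable {N : ℕ} {t : ℝ} {μ : Measure (EuclideanSpace ℂ (Fin N))} (S : BallFunctionSpace N t μ)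

section NonposExponent

lemma norm_kernel_sq_le_one (ht : t ≤ 0) {w : EuclideanSpace ℂ (Fin N)} (hw : w ∈ Ball N) :
    ‖S.kernel w‖ ^ 2 ≤ 1 := by
  have norm_lt : ‖w‖ < 1 := mem_ball_zero_iff.1 hw
  have base_nonneg : 0 ≤ 1 - ‖w‖ ^ 2 := by nlinarith [norm_nonneg w]
  have norm_sq : ((‖S.kernel w‖ ^ 2 : ℝ) : ℂ) = ((1 - ‖w‖ ^ 2) ^ (-t) : ℝ) := by
    rw [Complex.ofReal_cpow base_nonneg, Complex.ofReal_pow]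
    refine (inner_self_eq_norm_sq_to_K (𝕜 := ℂ) (S.kernel w)).symm.trans ?_
    rw [S.reproducing _ w hw, S.eval_kernel w hw w hw, inner_self_eq_norm_sq_to_K]
    simp
  rw [Complex.ofReal_injective norm_sq]
  exact Real.rpow_le_one base_nonneg (by nlinarith [sq_nonneg ‖w‖]) (neg_nonneg.2 ht)

lemma kernel_eq_kernel_zero (ht : t ≤ 0) {w : EuclideanSpace ℂ (Fin N)} (hw : w ∈ Ball N) :
    S.kernel w = S.kernel 0 := by
  have zero_mem : (0 : EuclideanSpace ℂ (Fin N)) ∈ Ball N := mem_ball_self one_pos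
  have inner_eq_one : ⟪S.kernel w, S.kernel 0⟫ = 1 := by
    rw [S.reproducing _ w hw, S.eval_kernel_zero hw]
  have norm_sq_sub := norm_sub_sq (𝕜 := ℂ) (S.kernel w) (S.kernel 0)
  rw [inner_eq_one, RCLike.one_re] at norm_sq_sub
  have dist_sq_nonpos : ‖S.kernel w - S.kernel 0‖ ^ 2 ≤ 0 := by
    linarith [S.norm_kernel_sq_le_one ht hw, S.norm_kernel_sq_le_one ht zero_mem]
  exact sub_eq_zero.1 (norm_eq_zero.1 (pow_eq_zero_iff two_ne_zero |>.1
    (dist_sq_nonpos.antisymm (sq_nonneg _))))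

lemma finiteDimensional_of_nonpos (ht : t ≤ 0) : FiniteDimensional ℂ S.H := by
  refine FiniteDimensional.of_injective (innerSL ℂ (S.kernel 0)).toLinearMap
    ((injective_iff_map_eq_zero _).2 fun u hu ↦ S.eq_zero_of_forall_inner_kernel fun w hw ↦ ?_)
  rw [S.kernel_eq_kernel_zero ht hw]
  exact hu

lemma isCompactOperator_of_nonpos (ht : t ≤ 0) (T : S.H →L[ℂ] S.H) : IsCompactOperator T := by
  have := S.finiteDimensional_of_nonpos ht
  have : ProperSpace S.H := FiniteDimensional.proper ℂ S.H
  exact isCompactOperator_of_locallyCompactSpace_dom T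

end NonposExponent

end BallFunctionSpace

theorem toeplitz_composition_commutator_compact_general
    {N : ℕ} {t : ℝ} {μ : Measure (EuclideanSpace ℂ (Fin N))} (S : BallFunctionSpace N t μ)
    {K : TopologicalSpace.Compacts (EuclideanSpace ℂ (Fin N))} (hK : IsCarriedBy μ K)
    {f : EuclideanSpace ℂ (Fin N) → ℂ} (hf : ContinuousOn f K)
    {φ : EuclideanSpace ℂ (Fin N) → EuclideanSpace ℂ (Fin N)}
    (φ_cont : ContinuousOn φ (closedBall 0 1)) (φ_ball : MapsTo φ (Ball N) (Ball N))
    (φ_maps : MapsTo φ K K)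
    {Cφ : S.H →L[ℂ] S.H} (hCφ : S.IsCompositionOperator φ Cφ)
    {Tf Tfφ : S.H →L[ℂ] S.H}
    (hTf : S.IsToeplitzOperator f Tf) (hTfφ : S.IsToeplitzOperator (f ∘ φ) Tfφ) :
    IsCompactOperator ⇑(Cφ.comp Tf - Tfφ.comp Cφ) := by
  rcases le_or_gt t 0 with ht | ht
  · exact S.isCompactOperator_of_nonpos ht _
  have := S.isFiniteMeasure hK
  let b : C(K, ℂ) := ⟨(K : Set _).domRestrict f, hf.domRestrict⟩
  let φK : C(K, K) := ⟨φ_maps.restrict, (φ_cont.mono hK.subset_closedBall).mapsToRestrict φ_maps⟩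
  rw [hTf.eq_toeplitz (b := b) hK fun _ ↦ rfl, hTfφ.eq_toeplitz (b := b.comp φK) hK fun _ ↦ rfl]
  exact S.isCompactOperator_comp_toeplitz_sub hK ht φ_cont φ_ball φK (fun _ ↦ rfl) hCφ b

section Carriers

lemma isCarriedBy_sphereMeasure (N : ℕ) [NeZero N] :
    IsCarriedBy (sphereMeasure N) ⟨sphere 0 1, isCompact_sphere _ _⟩ where
  subset_closedBall := sphere_subset_closedBall
  measure_compl := by
    have preimage_subset :
        (fun z : EuclideanSpace ℂ (Fin N) ↦ ‖z‖⁻¹ • z) ⁻¹' (sphere 0 1)ᶜ ⊆ {0} := by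
      rw [preimage_compl, compl_subset_comm]
      intro z hz
      rw [mem_preimage, mem_sphere_zero_iff_norm, norm_smul, norm_inv, norm_norm,
        inv_mul_cancel₀ (norm_ne_zero_iff.2 hz)]
    have ballMeasure_zero : ballMeasure N {0} = 0 := by
      rw [ballMeasure, Measure.smul_apply,
        Measure.absolutelyContinuous_of_le Measure.restrict_le_self (measure_singleton _),
        smul_zero]
    rw [sphereMeasure]
    exact (Measure.map_apply (by fun_prop) isClosed_sphere.measurableSet.compl).trans
      (measure_mono_null preimage_subset ballMeasure_zero)

lemma isCarriedBy_bergmanMeasure (N : ℕ) (s : ℝ) :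
    IsCarriedBy (bergmanMeasure N s) ⟨closedBall 0 1, isCompact_closedBall _ _⟩ where
  subset_closedBall := Subset.rfl
  measure_compl := by
    refine withDensity_absolutelyContinuous _ _ ?_
    have disjoint : (closedBall (0 : EuclideanSpace ℂ (Fin N)) 1)ᶜ ∩ Ball N = ∅ :=
      (disjoint_compl_left_iff_subset.2 ball_subset_closedBall).inter_eq
    rw [ballMeasure, Measure.smul_apply]
    refine (congrArg _ ?_).trans (smul_zero _)
    refine (Measure.restrict_apply isClosed_closedBall.measurableSet.compl).trans ?_
    rw [disjoint, measure_empty]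

lemma mapsTo_closedBall {N : ℕ} {φ : EuclideanSpace ℂ (Fin N) → EuclideanSpace ℂ (Fin N)}
    (φ_cont : ContinuousOn φ (closedBall 0 1)) (φ_ball : MapsTo φ (Ball N) (Ball N)) :
    MapsTo φ (closedBall 0 1) (closedBall 0 1) := by
  rw [← closure_ball _ one_ne_zero] at φ_cont ⊢
  exact φ_ball.closure_of_continuousOn φ_cont

end Carriers

/-- Let `φ` be an automorphism of `B_N` (extended continuously to the
closed ball, mapping the sphere to the sphere).  If `f` is continuous on `∂B_N` (Hardy case,
`t = N`, `μ = σ`), respectively continuous on the closed ball (weighted Bergman case,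
`t = N + s + 1`, `μ = v_s`, `s > -1`), then `C_φ T_f - T_{f∘φ} C_φ` is compact on `H²(B_N)`,
respectively on `A²_s(B_N)`. -/
theorem toeplitz_composition_commutator_compact
    (N : ℕ) (t : ℝ) (μ : Measure (EuclideanSpace ℂ (Fin N)))
    (f : EuclideanSpace ℂ (Fin N) → ℂ)
    (ht : (t = N ∧ μ = sphereMeasure N ∧ ContinuousOn f (Metric.sphere 0 1)) ∨
      ∃ s : ℝ, -1 < s ∧ t = N + s + 1 ∧ μ = bergmanMeasure N s ∧
        ContinuousOn f (Metric.closedBall 0 1))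
    (S : BallFunctionSpace N t μ)
    (φ : EuclideanSpace ℂ (Fin N) → EuclideanSpace ℂ (Fin N))
    (hφ : IsBallAutomorphism N φ)
    (hφc : ContinuousOn φ (Metric.closedBall 0 1))
    (hφs : Set.MapsTo φ (Metric.sphere 0 1) (Metric.sphere 0 1))
    (Cφ : S.H →L[ℂ] S.H) (hCφ : S.IsCompositionOperator φ Cφ)
    (Tf Tfφ : S.H →L[ℂ] S.H)
    (hTf : S.IsToeplitzOperator f Tf) (hTfφ : S.IsToeplitzOperator (f ∘ φ) Tfφ) :
    IsCompactOperator ⇑(Cφ.comp Tf - Tfφ.comp Cφ) := by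
  rcases ht with ⟨rfl, rfl, hf⟩ | ⟨s, -, -, rfl, hf⟩
  · rcases eq_or_ne N 0 with rfl | hN
    · exact S.isCompactOperator_of_nonpos Nat.cast_zero.le _
    · have : NeZero N := ⟨hN⟩
      exact toeplitz_composition_commutator_compact_general S (isCarriedBy_sphereMeasure N) hf
        hφc hφ.2.1 hφs hCφ hTf hTfφ
  · exact toeplitz_composition_commutator_compact_general S (isCarriedBy_bergmanMeasure N s) hf
      hφc hφ.2.1 (mapsTo_closedBall hφc hφ.2.1) hCφ hTf hTfφ
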